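/- arXiv:math-ph/0402014 — 7 statements merged into one kernel-verified Lean document; each statement's English description precedes it below -/
import Mathlib

section
/- Let K ≥ 2 be an integer, μ ∈ ℂ with Im μ > 0, and γ ∈ ℂ such that θ_{[00]}(γ;μ) ≠ 0 and θ_{[AB]}(0;μ) ≠ 0 for all 0 ≤ A,B ≤ K−1 with (A,B) ≠ (0,0). Then the elliptic r-matrix satisfies the two periodicity properties r(γ+1;μ) = (F⁻¹ ⊗ I)·r(γ;μ)·(F ⊗ I) and r(γ+μ;μ) = (H ⊗ I)·r(γ;μ)·(H⁻¹ ⊗ I), where I is the K×K identity matrix. -/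
open Complex Filter

/-- Theta function with characteristics `p, q`. -/
noncomputable def Theta (p q : ℝ) (γ μ : ℂ) : ℂ :=
  ∑' m : ℤ, Complex.exp ((Real.pi : ℂ) * Complex.I * μ * ((m : ℂ) + (p : ℂ))^2
    + 2 * (Real.pi : ℂ) * Complex.I * ((m : ℂ) + (p : ℂ)) * (γ + (q : ℂ)))

/-- The Jacobi theta function `θ₁`. -/
noncomputable def theta1 (γ μ : ℂ) : ℂ := -Theta (1/2) (1/2) γ μ

/-- Logarithmic derivative of `θ₁` in the first argument. -/
noncomputable def rho (γ μ : ℂ) : ℂ := deriv (fun z => theta1 z μ) γ / theta1 γ μ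

/-- `θ_{[AB]}`, theta with characteristics `A/K - 1/2`, `1/2 - B/K`. -/
noncomputable def thetaAB (K : ℕ) (A B : ℤ) (γ μ : ℂ) : ℂ :=
  Theta ((A : ℝ)/(K : ℝ) - 1/2) (1/2 - (B : ℝ)/(K : ℝ)) γ μ

/-- The coefficients `w_{AB}` of the elliptic r-matrix. -/
noncomputable def wAB (K : ℕ) (A B : ℤ) (γ μ : ℂ) : ℂ :=
  thetaAB K A B γ μ * deriv (fun z => thetaAB K 0 0 z μ) 0
    / (thetaAB K A B 0 μ * thetaAB K 0 0 γ μ)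

/-- The functions `Z_{AB}`. -/
noncomputable def ZAB (K : ℕ) (A B : ℤ) (γ μ : ℂ) : ℂ :=
  wAB K A B γ μ / (2 * (Real.pi : ℂ) * Complex.I) *
    (deriv (fun z => thetaAB K A B z μ) γ / thetaAB K A B γ μ
      - deriv (fun z => thetaAB K A B z μ) 0 / thetaAB K A B 0 μ)

/-- `ε = exp(2πi/K)`. -/
noncomputable def epsK (K : ℕ) : ℂ := Complex.exp (2 * (Real.pi : ℂ) * Complex.I / (K : ℂ))

/-- The diagonal matrix `F = diag(1, ε, …, ε^{K-1})`. -/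
noncomputable def Fmat (K : ℕ) : Matrix (Fin K) (Fin K) ℂ :=
  Matrix.diagonal (fun i => epsK K ^ (i : ℕ))

/-- The cyclic permutation matrix `H`. -/
def Hmat (K : ℕ) : Matrix (Fin K) (Fin K) ℂ :=
  Matrix.of fun i j => if (j : ℕ) = ((i : ℕ) + 1) % K then 1 else 0

/-- `σ_{AB} = H^A F^B` (indices taken mod `K`, using `H^K = F^K = 1`). -/
noncomputable def sigmaAB (K : ℕ) (A B : ℤ) : Matrix (Fin K) (Fin K) ℂ :=
  Hmat K ^ ((A % (K : ℤ)).toNat) * Fmat K ^ ((B % (K : ℤ)).toNat)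

/-- The dual basis `σ^{AB} = (ε^{-AB}/K)·σ_{-A,-B}`. -/
noncomputable def sigmaDualAB (K : ℕ) (A B : ℤ) : Matrix (Fin K) (Fin K) ℂ :=
  (epsK K ^ (-(A * B)) / (K : ℂ)) • sigmaAB K (-A) (-B)

open Kronecker in
/-- The elliptic r-matrix. -/
noncomputable def rmat (K : ℕ) (γ μ : ℂ) : Matrix (Fin K × Fin K) (Fin K × Fin K) ℂ :=
  ∑ A ∈ Finset.range K, ∑ B ∈ Finset.range K,
    if A = 0 ∧ B = 0 then 0
    else wAB K A B γ μ • (sigmaAB K A B ⊗ₖ sigmaDualAB K A B)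


theorem Theta_add_one (p q : ℝ) (γ μ : ℂ) :
    Theta p q (γ + 1) μ = Complex.exp (2 * (Real.pi : ℂ) * Complex.I * p) * Theta p q γ μ := by
  unfold Theta
  rw [← tsum_mul_left]
  refine tsum_congr fun m => ?_
  rw [← Complex.exp_add, Complex.exp_eq_exp_iff_exists_int]
  exact ⟨m, by ring⟩

theorem Theta_add_mu (p q : ℝ) (γ μ : ℂ) :
    Theta p q (γ + μ) μ = Complex.exp (-((Real.pi : ℂ) * Complex.I * μ)
      - 2 * (Real.pi : ℂ) * Complex.I * (γ + q)) * Theta p q γ μ := by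
  unfold Theta
  rw [← tsum_mul_left, ← (Equiv.addRight (1 : ℤ)).tsum_eq (fun m : ℤ => Complex.exp _ * _)]
  refine tsum_congr fun m => ?_
  rw [← Complex.exp_add]
  congr 1
  simp only [Equiv.coe_addRight]
  push_cast
  ring

theorem epsK_pow (K n : ℕ) :
    epsK K ^ n = Complex.exp (2 * (Real.pi : ℂ) * Complex.I * ((n : ℂ) / (K : ℂ))) := by
  unfold epsK
  rw [← Complex.exp_nat_mul]
  congr 1
  ring

theorem epsK_pow_self (K : ℕ) (hK : K ≠ 0) : epsK K ^ K = 1 := by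
  rw [epsK_pow, div_self (by exact_mod_cast hK), mul_one, Complex.exp_two_pi_mul_I]

theorem wAB_scale (K : ℕ) (A B : ℤ) (γ γ' μ c d : ℂ) (hd : d ≠ 0)
    (h1 : thetaAB K A B γ' μ = c * d * thetaAB K A B γ μ)
    (h2 : thetaAB K 0 0 γ' μ = d * thetaAB K 0 0 γ μ) :
    wAB K A B γ' μ = c * wAB K A B γ μ := by
  unfold wAB
  rw [h1, h2]
  rw [show c * d * thetaAB K A B γ μ * deriv (fun z => thetaAB K 0 0 z μ) 0
    = d * (c * (thetaAB K A B γ μ * deriv (fun z => thetaAB K 0 0 z μ) 0)) by ring,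
    show thetaAB K A B 0 μ * (d * thetaAB K 0 0 γ μ)
    = d * (thetaAB K A B 0 μ * thetaAB K 0 0 γ μ) by ring,
    mul_div_mul_left _ _ hd, mul_div_assoc]

theorem wAB_add_one (K A B : ℕ) (γ μ : ℂ) :
    wAB K A B (γ + 1) μ = epsK K ^ A * wAB K A B γ μ := by
  refine wAB_scale K A B γ (γ + 1) μ _
    (Complex.exp (2 * (Real.pi : ℂ) * Complex.I * (-1 / 2))) (Complex.exp_ne_zero _) ?_ ?_
  · unfold thetaAB
    rw [Theta_add_one, epsK_pow, ← Complex.exp_add]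
    congr 2
    push_cast
    ring
  · unfold thetaAB
    rw [Theta_add_one]
    congr 2
    push_cast
    ring

theorem wAB_add_mu (K A B : ℕ) (γ μ : ℂ) :
    wAB K A B (γ + μ) μ = epsK K ^ B * wAB K A B γ μ := by
  refine wAB_scale K A B γ (γ + μ) μ _
    (Complex.exp (-((Real.pi : ℂ) * Complex.I * μ)
      - 2 * (Real.pi : ℂ) * Complex.I * (γ + 1 / 2))) (Complex.exp_ne_zero _) ?_ ?_
  · unfold thetaAB
    rw [Theta_add_mu, epsK_pow, ← Complex.exp_add]
    congr 2
    push_cast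
    ring
  · unfold thetaAB
    rw [Theta_add_mu]
    congr 2
    push_cast
    ring

theorem Hmat_mul_Fmat (K : ℕ) (hK : K ≠ 0) :
    Hmat K * Fmat K = epsK K • (Fmat K * Hmat K) := by
  ext i j
  simp only [Fmat, Hmat, Matrix.mul_diagonal, Matrix.smul_apply, Matrix.diagonal_mul,
    Matrix.of_apply, smul_eq_mul]
  split_ifs with h
  · have h3 : epsK K ^ ((i : ℕ) + 1) = epsK K ^ (((i : ℕ) + 1) % K) := by
      conv_lhs => rw [← Nat.div_add_mod ((i : ℕ) + 1) K, pow_add, pow_mul, epsK_pow_self K hK,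
        one_pow, one_mul]
    rw [h, ← h3]
    ring
  · simp

theorem Hmat_mul_Fmat_pow (K B : ℕ) (hK : K ≠ 0) :
    Hmat K * Fmat K ^ B = epsK K ^ B • (Fmat K ^ B * Hmat K) := by
  induction B with
  | zero => simp
  | succ n ih =>
    rw [pow_succ, ← mul_assoc, ih, smul_mul_assoc, mul_assoc, Hmat_mul_Fmat K hK,
      mul_smul_comm, smul_smul, mul_assoc, pow_succ]

theorem Hmat_pow_mul_Fmat (K A : ℕ) (hK : K ≠ 0) :
    Hmat K ^ A * Fmat K = epsK K ^ A • (Fmat K * Hmat K ^ A) := by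
  induction A with
  | zero => simp
  | succ n ih =>
    rw [pow_succ, mul_assoc, Hmat_mul_Fmat K hK, mul_smul_comm, ← mul_assoc, ih,
      smul_mul_assoc, smul_smul, mul_assoc, pow_succ, mul_comm (epsK K)]

theorem Fmat_inv_mul (K : ℕ) : (Fmat K)⁻¹ * Fmat K = 1 := by
  apply Matrix.nonsing_inv_mul
  rw [Fmat, Matrix.det_diagonal, isUnit_iff_ne_zero, Finset.prod_ne_zero_iff]
  intro i _
  exact pow_ne_zero _ (Complex.exp_ne_zero _)

theorem Hmat_mul_inv (K : ℕ) : Hmat K * (Hmat K)⁻¹ = 1 := by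
  apply Matrix.mul_nonsing_inv
  apply Matrix.isUnit_det_of_right_inverse (B := (Hmat K).transpose)
  ext i j
  have hK : 0 < K := i.pos
  rw [Matrix.mul_apply, Finset.sum_eq_single (⟨((i : ℕ) + 1) % K, Nat.mod_lt _ hK⟩ : Fin K)]
  · simp only [Hmat, Matrix.transpose_apply, Matrix.of_apply, if_true, one_mul, Matrix.one_apply]
    refine if_congr ?_ rfl rfl
    constructor
    · intro h
      have h2 : (i : ℕ) ≡ j [MOD K] := Nat.ModEq.add_right_cancel' 1 h
      exact Fin.ext (Nat.ModEq.eq_of_lt_of_lt h2 i.2 j.2)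
    · rintro rfl
      rfl
  · intro k _ hk
    have : ¬ ((k : ℕ) = ((i : ℕ) + 1) % K) := fun h => hk (Fin.ext h)
    simp [Hmat, this]
  · simp

theorem sigmaAB_nat (K A B : ℕ) (hA : A < K) (hB : B < K) :
    sigmaAB K A B = Hmat K ^ A * Fmat K ^ B := by
  unfold sigmaAB
  rw [← Int.natCast_mod, ← Int.natCast_mod, Nat.mod_eq_of_lt hA, Nat.mod_eq_of_lt hB]
  simp

theorem conj_F (K A B : ℕ) (hA : A < K) (hB : B < K) :
    (Fmat K)⁻¹ * sigmaAB K A B * Fmat K = epsK K ^ A • sigmaAB K A B := by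
  rw [sigmaAB_nat K A B hA hB, mul_assoc, mul_assoc, ← pow_succ, pow_succ', ← mul_assoc (Hmat K ^ A),
    Hmat_pow_mul_Fmat K A (by omega), smul_mul_assoc, mul_smul_comm, mul_assoc, ← mul_assoc,
    Fmat_inv_mul, one_mul]

theorem conj_H (K A B : ℕ) (hA : A < K) (hB : B < K) :
    Hmat K * sigmaAB K A B * (Hmat K)⁻¹ = epsK K ^ B • sigmaAB K A B := by
  rw [sigmaAB_nat K A B hA hB, ← mul_assoc, ← pow_succ', pow_succ, mul_assoc (Hmat K ^ A),
    Hmat_mul_Fmat_pow K B (by omega), mul_smul_comm, smul_mul_assoc, mul_assoc, mul_assoc,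
    Hmat_mul_inv, mul_one]

open Kronecker in
theorem rmat_conj (K : ℕ) (γ γ' μ : ℂ) (P Q : Matrix (Fin K) (Fin K) ℂ) (c : ℕ → ℕ → ℂ)
    (hw : ∀ A B : ℕ, wAB K A B γ' μ = c A B * wAB K A B γ μ)
    (hc : ∀ A B : ℕ, A < K → B < K → P * sigmaAB K A B * Q = c A B • sigmaAB K A B) :
    rmat K γ' μ = (P ⊗ₖ (1 : Matrix (Fin K) (Fin K) ℂ)) * rmat K γ μ
      * (Q ⊗ₖ (1 : Matrix (Fin K) (Fin K) ℂ)) := by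
  unfold rmat
  rw [Finset.mul_sum, Finset.sum_mul]
  refine Finset.sum_congr rfl fun A hA => ?_
  rw [Finset.mul_sum, Finset.sum_mul]
  refine Finset.sum_congr rfl fun B hB => ?_
  split_ifs with h
  · simp
  · rw [mul_smul_comm, smul_mul_assoc, ← Matrix.mul_kronecker_mul, ← Matrix.mul_kronecker_mul,
      hc A B (Finset.mem_range.1 hA) (Finset.mem_range.1 hB), one_mul, mul_one,
      Matrix.smul_kronecker, smul_smul, hw, mul_comm]

open Kronecker in
/-- periodicity of the elliptic r-matrix:
`r(γ+1) = (F⁻¹⊗I)·r(γ)·(F⊗I)` and `r(γ+μ) = (H⊗I)·r(γ)·(H⁻¹⊗I)`. -/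
theorem rmat_periodicity (K : ℕ) (hK : 2 ≤ K) (μ γ : ℂ) (hμ : 0 < μ.im)
    (h00 : thetaAB K 0 0 γ μ ≠ 0)
    (h0 : ∀ A B : ℕ, A < K → B < K → ¬(A = 0 ∧ B = 0) → thetaAB K A B 0 μ ≠ 0) :
    rmat K (γ + 1) μ
      = ((Fmat K)⁻¹ ⊗ₖ (1 : Matrix (Fin K) (Fin K) ℂ)) * rmat K γ μ
          * (Fmat K ⊗ₖ (1 : Matrix (Fin K) (Fin K) ℂ)) ∧
    rmat K (γ + μ) μ
      = (Hmat K ⊗ₖ (1 : Matrix (Fin K) (Fin K) ℂ)) * rmat K γ μ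
          * ((Hmat K)⁻¹ ⊗ₖ (1 : Matrix (Fin K) (Fin K) ℂ)) := by
  exact ⟨rmat_conj K γ (γ + 1) μ _ _ (fun A _ => epsK K ^ A)
      (fun A B => wAB_add_one K A B γ μ) (conj_F K),
    rmat_conj K γ (γ + μ) μ _ _ (fun _ B => epsK K ^ B)
      (fun A B => wAB_add_mu K A B γ μ) (conj_H K)⟩
end

section
/- For all p,q ∈ ℝ, the theta function with characteristics satisfies the heat equation: for every γ ∈ ℂ and every μ ∈ ℂ with Im μ > 0, the second derivative in γ and the first derivative in μ exist and ∂²θ[p,q](γ;μ)/∂γ² = 4πi·∂θ[p,q](γ;μ)/∂μ. -/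
open Complex Filter

/-- Summand of the theta series. -/
noncomputable def thetaTerm (p q : ℝ) (m : ℤ) (z τ : ℂ) : ℂ :=
  Complex.exp ((Real.pi : ℂ) * Complex.I * τ * ((m : ℂ) + (p : ℂ))^2
    + 2 * (Real.pi : ℂ) * Complex.I * ((m : ℂ) + (p : ℂ)) * (z + (q : ℂ)))

/-- The majorant of the summand. -/
noncomputable def thetaBound (p S T : ℝ) (m : ℤ) : ℝ :=
  Real.exp (2 * Real.pi * S * |p|) *
    Real.exp (-Real.pi * (T * (m : ℝ) ^ 2 - 2 * (S + T * |p|) * |(m : ℝ)|))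

lemma norm_thetaTerm (p q : ℝ) (m : ℤ) (z τ : ℂ) :
    ‖thetaTerm p q m z τ‖ =
      Real.exp (-Real.pi * ((m + p) ^ 2 * τ.im + 2 * (m + p) * z.im)) := by
  have h : (Real.pi : ℂ) * Complex.I * τ * ((m : ℂ) + (p : ℂ))^2
      + 2 * (Real.pi : ℂ) * Complex.I * ((m : ℂ) + (p : ℂ)) * (z + (q : ℂ))
      = ((Real.pi * (m + p) ^ 2 : ℝ) : ℂ) * τ * I
        + ((2 * Real.pi * (m + p) : ℝ) : ℂ) * (z + (q : ℂ)) * I := by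
    push_cast; ring
  rw [thetaTerm, h, Complex.norm_exp, add_re, mul_I_re, im_ofReal_mul, mul_I_re, im_ofReal_mul,
    add_im, ofReal_im]
  congr 1
  ring

lemma norm_thetaTerm_le (p q : ℝ) {S T : ℝ} (hT : 0 < T) (m : ℤ) {z τ : ℂ}
    (hz : |z.im| ≤ S) (hτ : T ≤ τ.im) : ‖thetaTerm p q m z τ‖ ≤ thetaBound p S T m := by
  rw [norm_thetaTerm, thetaBound, ← Real.exp_add, Real.exp_le_exp]
  have h1 : ((m : ℝ) + p) ^ 2 * T ≤ ((m : ℝ) + p) ^ 2 * τ.im :=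
    mul_le_mul_of_nonneg_left hτ (sq_nonneg _)
  have h2 : -((m + p) * z.im) ≤ (|(m : ℝ)| + |p|) * S := by
    refine (neg_le_abs _).trans ?_
    rw [abs_mul]
    exact mul_le_mul (abs_add_le _ _) hz (abs_nonneg _) (by positivity)
  have h3 : -((m : ℝ) * p) ≤ |(m : ℝ)| * |p| := by
    rw [← abs_mul]; exact neg_le_abs _
  have h4 : T * -((m : ℝ) * p) ≤ T * (|(m : ℝ)| * |p|) := mul_le_mul_of_nonneg_left h3 hT.le
  have h5 : 0 ≤ T * p ^ 2 := by positivity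
  have h6 : -((m + p) ^ 2 * τ.im + 2 * (m + p) * z.im) ≤
      2 * S * |p| - (T * (m : ℝ) ^ 2 - 2 * (S + T * |p|) * |(m : ℝ)|) := by
    nlinarith
  have := mul_le_mul_of_nonneg_left h6 Real.pi_pos.le
  linarith

lemma summable_thetaBound (p S : ℝ) {T : ℝ} (hT : 0 < T) : Summable (thetaBound p S T) := by
  have := (summable_pow_mul_jacobiTheta₂_term_bound (S + T * |p|) hT 0).mul_left
    (Real.exp (2 * Real.pi * S * |p|))
  refine this.congr fun m => ?_
  simp only [thetaBound, pow_zero, one_mul, Int.cast_abs]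

lemma summable_thetaBound' (p S : ℝ) {T : ℝ} (hT : 0 < T) :
    Summable (fun m : ℤ => 2 * Real.pi * (|(m : ℝ)| + |p|) * thetaBound p S T m) := by
  have h1 := ((summable_pow_mul_jacobiTheta₂_term_bound (S + T * |p|) hT 1).mul_left
    (2 * Real.pi * Real.exp (2 * Real.pi * S * |p|)))
  have h2 := (summable_thetaBound p S hT).mul_left (2 * Real.pi * |p|)
  refine (h1.add h2).congr fun m => ?_
  simp only [thetaBound, pow_one, Int.cast_abs]
  ring

lemma hasDerivAt_thetaTerm_fst (p q : ℝ) (m : ℤ) (z τ : ℂ) :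
    HasDerivAt (fun z => thetaTerm p q m z τ)
      (2 * Real.pi * I * (m + p) * thetaTerm p q m z τ) z := by
  have := (((((hasDerivAt_id z).add_const (q : ℂ)).const_mul
    (2 * (Real.pi : ℂ) * Complex.I * ((m : ℂ) + (p : ℂ)))).const_add
    ((Real.pi : ℂ) * Complex.I * τ * ((m : ℂ) + (p : ℂ))^2))).cexp
  refine this.congr_deriv ?_
  simp only [thetaTerm, id]
  ring

lemma hasDerivAt_thetaTerm_snd (p q : ℝ) (m : ℤ) (z τ : ℂ) :
    HasDerivAt (fun τ => thetaTerm p q m z τ)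
      (Real.pi * I * (m + p) ^ 2 * thetaTerm p q m z τ) τ := by
  have := ((((hasDerivAt_id τ).const_mul ((Real.pi : ℂ) * Complex.I)).mul_const
    (((m : ℂ) + (p : ℂ))^2)).add_const
    (2 * (Real.pi : ℂ) * Complex.I * ((m : ℂ) + (p : ℂ)) * (z + (q : ℂ)))).cexp
  refine this.congr_deriv ?_
  simp only [thetaTerm, id]
  ring

lemma isOpen_strip (S : ℝ) : IsOpen {z : ℂ | |z.im| < S} :=
  isOpen_lt (by fun_prop) continuous_const

lemma theta_fst (p q : ℝ) (γ μ : ℂ) (hμ : 0 < μ.im) :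
    DifferentiableAt ℂ (fun z => Theta p q z μ) γ ∧
    deriv (fun z => Theta p q z μ) γ
      = ∑' m : ℤ, 2 * Real.pi * I * (m + p) * thetaTerm p q m γ μ := by
  obtain ⟨S, hS⟩ := exists_gt |γ.im|
  have hd : ∀ m : ℤ, DifferentiableOn ℂ (fun z => thetaTerm p q m z μ) {z : ℂ | |z.im| < S} :=
    fun m z _ => (hasDerivAt_thetaTerm_fst p q m z μ).differentiableAt.differentiableWithinAt
  have hb : ∀ (m : ℤ) (z : ℂ), z ∈ {z : ℂ | |z.im| < S} →
      ‖thetaTerm p q m z μ‖ ≤ thetaBound p S μ.im m :=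
    fun m z hz => norm_thetaTerm_le p q hμ m (le_of_lt hz) le_rfl
  have hs := summable_thetaBound p S hμ
  refine ⟨(differentiableOn_tsum_of_summable_norm hs hd (isOpen_strip S) hb).differentiableAt
    ((isOpen_strip S).mem_nhds hS), ?_⟩
  have := (hasSum_deriv_of_summable_norm hs hd (isOpen_strip S) hb hS).tsum_eq
  simp only [(hasDerivAt_thetaTerm_fst p q _ _ μ).deriv] at this
  exact this.symm

lemma theta_fst_fst (p q : ℝ) (γ μ : ℂ) (hμ : 0 < μ.im) :
    DifferentiableAt ℂ (deriv (fun z => Theta p q z μ)) γ ∧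
    deriv (deriv (fun z => Theta p q z μ)) γ
      = ∑' m : ℤ, 2 * Real.pi * I * (m + p) *
        (2 * Real.pi * I * (m + p) * thetaTerm p q m γ μ) := by
  have hfun : deriv (fun z => Theta p q z μ)
      = fun z => ∑' m : ℤ, 2 * Real.pi * I * (m + p) * thetaTerm p q m z μ :=
    funext fun z => (theta_fst p q z μ hμ).2
  rw [hfun]
  obtain ⟨S, hS⟩ := exists_gt |γ.im|
  have hD : ∀ (m : ℤ) (z : ℂ), HasDerivAt
      (fun z => 2 * Real.pi * I * (m + p) * thetaTerm p q m z μ)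
      (2 * Real.pi * I * (m + p) * (2 * Real.pi * I * (m + p) * thetaTerm p q m z μ)) z :=
    fun m z => (hasDerivAt_thetaTerm_fst p q m z μ).const_mul _
  have hd : ∀ m : ℤ, DifferentiableOn ℂ
      (fun z => 2 * Real.pi * I * (m + p) * thetaTerm p q m z μ) {z : ℂ | |z.im| < S} :=
    fun m z _ => (hD m z).differentiableAt.differentiableWithinAt
  have hb : ∀ (m : ℤ) (z : ℂ), z ∈ {z : ℂ | |z.im| < S} →
      ‖2 * Real.pi * I * (m + p) * thetaTerm p q m z μ‖
        ≤ 2 * Real.pi * (|(m : ℝ)| + |p|) * thetaBound p S μ.im m := by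
    intro m z hz
    rw [norm_mul]
    refine mul_le_mul ?_ (norm_thetaTerm_le p q hμ m (le_of_lt hz) le_rfl) (norm_nonneg _)
      (by positivity)
    have h : ‖(m : ℂ) + p‖ ≤ |(m : ℝ)| + |p| := by
      have := abs_add_le (m : ℝ) p
      rwa [← Real.norm_eq_abs, ← Complex.norm_real, ofReal_add, ofReal_intCast] at this
    rw [norm_mul, norm_mul, norm_mul, norm_I, Complex.norm_two,
      Complex.norm_of_nonneg Real.pi_pos.le, mul_one]
    exact mul_le_mul_of_nonneg_left h (by positivity)
  have hs := summable_thetaBound' p S hμ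
  refine ⟨(differentiableOn_tsum_of_summable_norm hs hd (isOpen_strip S) hb).differentiableAt
    ((isOpen_strip S).mem_nhds hS), ?_⟩
  have := (hasSum_deriv_of_summable_norm hs hd (isOpen_strip S) hb hS).tsum_eq
  simp only [(hD _ _).deriv] at this
  exact this.symm

lemma theta_snd (p q : ℝ) (γ μ : ℂ) (hμ : 0 < μ.im) :
    DifferentiableAt ℂ (fun t => Theta p q γ t) μ ∧
    deriv (fun t => Theta p q γ t) μ
      = ∑' m : ℤ, Real.pi * I * (m + p) ^ 2 * thetaTerm p q m γ μ := by
  obtain ⟨T, hT, hTμ⟩ := exists_between hμ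
  have hU : IsOpen {t : ℂ | T < t.im} := isOpen_lt continuous_const continuous_im
  have hd : ∀ m : ℤ, DifferentiableOn ℂ (fun t => thetaTerm p q m γ t) {t : ℂ | T < t.im} :=
    fun m t _ => (hasDerivAt_thetaTerm_snd p q m γ t).differentiableAt.differentiableWithinAt
  have hb : ∀ (m : ℤ) (t : ℂ), t ∈ {t : ℂ | T < t.im} →
      ‖thetaTerm p q m γ t‖ ≤ thetaBound p |γ.im| T m :=
    fun m t ht => norm_thetaTerm_le p q hT m le_rfl (le_of_lt ht)
  have hs := summable_thetaBound p |γ.im| hT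
  refine ⟨(differentiableOn_tsum_of_summable_norm hs hd hU hb).differentiableAt
    (hU.mem_nhds hTμ), ?_⟩
  have := (hasSum_deriv_of_summable_norm hs hd hU hb hTμ).tsum_eq
  simp only [(hasDerivAt_thetaTerm_snd p q _ γ _).deriv] at this
  exact this.symm

/-- the heat equation `∂²_γ θ[p,q] = 4πi·∂_μ θ[p,q]`
(both derivatives exist). -/
theorem theta_heat_equation (p q : ℝ) (γ μ : ℂ) (hμ : 0 < μ.im) :
    DifferentiableAt ℂ (fun z => Theta p q z μ) γ ∧
    DifferentiableAt ℂ (deriv (fun z => Theta p q z μ)) γ ∧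
    DifferentiableAt ℂ (fun m => Theta p q γ m) μ ∧
    deriv (deriv (fun z => Theta p q z μ)) γ
      = 4 * (Real.pi : ℂ) * Complex.I * deriv (fun m => Theta p q γ m) μ := by
  refine ⟨(theta_fst p q γ μ hμ).1, (theta_fst_fst p q γ μ hμ).1, (theta_snd p q γ μ hμ).1, ?_⟩
  rw [(theta_fst_fst p q γ μ hμ).2, (theta_snd p q γ μ hμ).2, ← tsum_mul_left]
  refine tsum_congr fun m => ?_
  ring
end

section
/- Let K ≥ 2 be an integer and A,B integers with (A,B) not both ≡ 0 mod K. At every point (γ;μ) with Im μ > 0, θ_{[00]}(γ;μ) ≠ 0, θ_{[AB]}(γ;μ) ≠ 0 and θ_{[AB]}(0;μ) ≠ 0, the derivative of w_{AB}(γ;μ) with respect to μ and the derivative of Z_{AB}(γ;μ) with respect to γ both exist and are equal: ∂_μ w_{AB}(γ;μ) = ∂_γ Z_{AB}(γ;μ). -/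
open Complex Filter

/-- term of the theta series with derivative weights -/
noncomputable def sTerm (k : ℕ) (p q : ℝ) (γ μ : ℂ) (m : ℤ) : ℂ :=
  (2 * (Real.pi : ℂ) * Complex.I * ((m : ℂ) + (p : ℂ)))^k *
  Complex.exp ((Real.pi : ℂ) * Complex.I * μ * ((m : ℂ) + (p : ℂ))^2
    + 2 * (Real.pi : ℂ) * Complex.I * ((m : ℂ) + (p : ℂ)) * (γ + (q : ℂ)))

/-- the differentiated theta series -/
noncomputable def sSer (k : ℕ) (p q : ℝ) (γ μ : ℂ) : ℂ := ∑' m : ℤ, sTerm k p q γ μ m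

lemma Theta_eq_sSer (p q : ℝ) (γ μ : ℂ) : Theta p q γ μ = sSer 0 p q γ μ := by
  simp [Theta, sSer, sTerm]

lemma sTerm_norm_le (k : ℕ) (p q : ℝ) (S T : ℝ) (hT : 0 < T) (γ μ : ℂ)
    (hγ : |γ.im| ≤ S) (hμ : T ≤ μ.im) (m : ℤ) :
    ‖sTerm k p q γ μ m‖ ≤ (2 * Real.pi)^k * k.factorial *
      Real.exp ((2 * Real.pi * S + 2)^2 / (4 * Real.pi * T)) * Real.exp |p| *
      Real.exp (-|(m:ℝ)|) := by
  have hpi := Real.pi_pos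
  set x : ℝ := |(m:ℝ) + p| with hx
  have hx0 : 0 ≤ x := abs_nonneg _
  have h1 : ‖(2 * (Real.pi : ℂ) * Complex.I * ((m : ℂ) + (p : ℂ)))^k‖ = (2 * Real.pi)^k * x^k := by
    have : ((m : ℂ) + (p : ℂ)) = (((m:ℝ) + p : ℝ) : ℂ) := by push_cast; rfl
    rw [this, norm_pow, norm_mul, norm_mul, norm_mul, Complex.norm_real, Complex.norm_real]
    simp only [Complex.norm_I, Real.norm_eq_abs, abs_of_pos hpi, Complex.norm_two, mul_one, ← hx]
    rw [mul_pow]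
  have h2 : ((Real.pi : ℂ) * Complex.I * μ * ((m : ℂ) + (p : ℂ))^2
    + 2 * (Real.pi : ℂ) * Complex.I * ((m : ℂ) + (p : ℂ)) * (γ + (q : ℂ))).re =
    -Real.pi * μ.im * x^2 - 2 * Real.pi * ((m:ℝ)+p) * γ.im := by
    have : ((m : ℂ) + (p : ℂ)) = (((m:ℝ) + p : ℝ) : ℂ) := by push_cast; rfl
    rw [this, hx, sq_abs, ← Complex.ofReal_pow]
    generalize (m:ℝ) + p = y
    simp [Complex.mul_re, Complex.mul_im, -Complex.ofReal_pow]
    ring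
  have h3 : x^k ≤ k.factorial * Real.exp x := by
    have := Real.pow_div_factorial_le_exp x hx0 k
    rw [div_le_iff₀ (by positivity)] at this
    linarith
  have h4 : -((m:ℝ)+p) * γ.im ≤ x * S := by
    calc -((m:ℝ)+p) * γ.im ≤ |-((m:ℝ)+p) * γ.im| := le_abs_self _
      _ = x * |γ.im| := by rw [abs_mul, abs_neg]
      _ ≤ x * S := by gcongr
  have h5 : |(m:ℝ)| ≤ x + |p| := by
    have := abs_sub ((m:ℝ)+p) p
    simpa using this
  have h6 : x + (-Real.pi * μ.im * x^2 - 2 * Real.pi * ((m:ℝ)+p) * γ.im) ≤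
      (2 * Real.pi * S + 2)^2 / (4 * Real.pi * T) + |p| + -|(m:ℝ)| := by
    have h7 : (2 * Real.pi * S + 2) * x - Real.pi * T * x^2 ≤
        (2 * Real.pi * S + 2)^2 / (4 * Real.pi * T) := by
      rw [le_div_iff₀ (by positivity)]
      nlinarith [sq_nonneg ((2 * Real.pi * S + 2) - 2 * Real.pi * T * x)]
    have h8 : Real.pi * T * x^2 ≤ Real.pi * μ.im * x^2 := by gcongr
    have h9 := mul_le_mul_of_nonneg_left h4 (by positivity : 0 ≤ 2 * Real.pi)
    nlinarith
  rw [sTerm, norm_mul, h1, Complex.norm_exp, h2]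
  calc _ ≤ (2 * Real.pi)^k * (k.factorial * Real.exp x) *
        Real.exp (-Real.pi * μ.im * x^2 - 2 * Real.pi * ((m:ℝ)+p) * γ.im) := by gcongr
    _ = (2 * Real.pi)^k * k.factorial *
        Real.exp (x + (-Real.pi * μ.im * x^2 - 2 * Real.pi * ((m:ℝ)+p) * γ.im)) := by
          rw [Real.exp_add]; ring
    _ ≤ (2 * Real.pi)^k * k.factorial * Real.exp
      ((2 * Real.pi * S + 2)^2 / (4 * Real.pi * T) + |p| + -|(m:ℝ)|) := by gcongr
    _ = _ := by rw [Real.exp_add, Real.exp_add]; ring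

lemma summable_exp_neg_abs_int : Summable (fun m : ℤ => Real.exp (-|(m:ℝ)|)) := by
  have h : Summable (fun n : ℕ => Real.exp (-(n:ℝ))) := by
    simpa using Real.summable_exp_neg_nat
  refine Summable.of_nat_of_neg ?_ ?_
  · simpa using h
  · simpa using h

lemma sTerm_bound_summable (k : ℕ) (p S T : ℝ) : Summable (fun m : ℤ => (2 * Real.pi)^k * k.factorial *
      Real.exp ((2 * Real.pi * S + 2)^2 / (4 * Real.pi * T)) * Real.exp |p| *
      Real.exp (-|(m:ℝ)|)) := summable_exp_neg_abs_int.mul_left _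

lemma sTerm_summable (k : ℕ) (p q : ℝ) (γ μ : ℂ) (hμ : 0 < μ.im) :
    Summable (fun m => ‖sTerm k p q γ μ m‖) :=
  Summable.of_nonneg_of_le (fun _ => norm_nonneg _)
    (fun m => sTerm_norm_le k p q |γ.im| μ.im hμ γ μ le_rfl le_rfl m)
    (sTerm_bound_summable k p _ _)

lemma sTerm_hasDerivAt_gamma (k : ℕ) (p q : ℝ) (γ μ : ℂ) (m : ℤ) :
    HasDerivAt (fun z => sTerm k p q z μ m) (sTerm (k+1) p q γ μ m) γ := by
  unfold sTerm
  have h := (((((hasDerivAt_id γ).add_const (q:ℂ)).const_mul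
    (2 * (Real.pi : ℂ) * Complex.I * ((m : ℂ) + (p : ℂ)))).const_add
    ((Real.pi : ℂ) * Complex.I * μ * ((m : ℂ) + (p : ℂ))^2)).cexp).const_mul
    ((2 * (Real.pi : ℂ) * Complex.I * ((m : ℂ) + (p : ℂ)))^k)
  refine h.congr_deriv ?_
  simp only [id]
  ring

lemma sTerm_hasDerivAt_mu (k : ℕ) (p q : ℝ) (γ μ : ℂ) (m : ℤ) :
    HasDerivAt (fun z => sTerm k p q γ z m)
      (sTerm (k+2) p q γ μ m / (4 * Real.pi * Complex.I)) μ := by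
  unfold sTerm
  have h := (((((hasDerivAt_id μ).const_mul ((Real.pi : ℂ) * Complex.I)).mul_const
    (((m : ℂ) + (p : ℂ))^2)).add_const
    (2 * (Real.pi : ℂ) * Complex.I * ((m : ℂ) + (p : ℂ)) * (γ + (q : ℂ)))).cexp).const_mul
    ((2 * (Real.pi : ℂ) * Complex.I * ((m : ℂ) + (p : ℂ)))^k)
  refine h.congr_deriv ?_
  have : (Real.pi : ℂ) ≠ 0 := by exact_mod_cast Real.pi_ne_zero
  simp only [id]
  field_simp
  ring

lemma sSer_hasDerivAt_gamma (k : ℕ) (p q : ℝ) (γ μ : ℂ) (hμ : 0 < μ.im) :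
    HasDerivAt (fun z => sSer k p q z μ) (sSer (k+1) p q γ μ) γ := by
  have hU : IsOpen {z : ℂ | |z.im| < |γ.im| + 1} :=
    isOpen_lt (by fun_prop) (by fun_prop)
  have hmem : γ ∈ {z : ℂ | |z.im| < |γ.im| + 1} := by simp
  have hd : ∀ m : ℤ, DifferentiableOn ℂ (fun z => sTerm k p q z μ m)
      {z : ℂ | |z.im| < |γ.im| + 1} := fun m z _ =>
    (sTerm_hasDerivAt_gamma k p q z μ m).differentiableAt.differentiableWithinAt
  have hb : ∀ (m : ℤ) (z : ℂ), z ∈ {z : ℂ | |z.im| < |γ.im| + 1} → ‖sTerm k p q z μ m‖ ≤ _ :=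
    fun m z hz => sTerm_norm_le k p q (|γ.im| + 1) μ.im hμ z μ (le_of_lt hz) le_rfl m
  have h1 := Complex.hasSum_deriv_of_summable_norm
    (sTerm_bound_summable k p (|γ.im| + 1) μ.im) hd hU hb hmem
  have h2 := (Complex.differentiableOn_tsum_of_summable_norm
    (sTerm_bound_summable k p (|γ.im| + 1) μ.im) hd hU hb).differentiableAt (hU.mem_nhds hmem)
  have h3 := h2.hasDerivAt
  rw [← h1.tsum_eq] at h3
  simp only [(sTerm_hasDerivAt_gamma k p q _ μ _).deriv] at h3
  exact h3

lemma sSer_hasDerivAt_mu (k : ℕ) (p q : ℝ) (γ μ : ℂ) (hμ : 0 < μ.im) :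
    HasDerivAt (fun z => sSer k p q γ z) (sSer (k+2) p q γ μ / (4 * Real.pi * Complex.I)) μ := by
  have hU : IsOpen {z : ℂ | μ.im / 2 < z.im} :=
    isOpen_lt (by fun_prop) (by fun_prop)
  have hmem : μ ∈ {z : ℂ | μ.im / 2 < z.im} := by simp [hμ]
  have hd : ∀ m : ℤ, DifferentiableOn ℂ (fun z => sTerm k p q γ z m)
      {z : ℂ | μ.im / 2 < z.im} := fun m z _ =>
    (sTerm_hasDerivAt_mu k p q γ z m).differentiableAt.differentiableWithinAt
  have hb : ∀ (m : ℤ) (z : ℂ), z ∈ {z : ℂ | μ.im / 2 < z.im} → ‖sTerm k p q γ z m‖ ≤ _ :=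
    fun m z hz => sTerm_norm_le k p q |γ.im| (μ.im / 2) (by linarith) γ z le_rfl (le_of_lt hz) m
  have h1 := Complex.hasSum_deriv_of_summable_norm
    (sTerm_bound_summable k p |γ.im| (μ.im / 2)) hd hU hb hmem
  have h2 := (Complex.differentiableOn_tsum_of_summable_norm
    (sTerm_bound_summable k p |γ.im| (μ.im / 2)) hd hU hb).differentiableAt (hU.mem_nhds hmem)
  have h3 := h2.hasDerivAt
  rw [← h1.tsum_eq] at h3
  simp only [(sTerm_hasDerivAt_mu k p q γ _ _).deriv, tsum_div_const] at h3
  exact h3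

/-- index change for the product formula -/
def idxEquiv : (ℤ × ℤ) ⊕ (ℤ × ℤ) ≃ ℤ × ℤ where
  toFun := Sum.elim (fun a => (a.1 + a.2, a.1 - a.2)) (fun a => (a.1 + a.2 + 1, a.1 - a.2))
  invFun a := if (a.1 + a.2) % 2 = 0 then Sum.inl ((a.1 + a.2) / 2, (a.1 - a.2) / 2)
    else Sum.inr ((a.1 + a.2 - 1) / 2, (a.1 - a.2 - 1) / 2)
  left_inv := by
    rintro (⟨a, b⟩ | ⟨a, b⟩)
    · have : (a + b + (a - b)) % 2 = 0 := by omega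
      simp only [Sum.elim_inl, this, if_true, Sum.inl.injEq, Prod.mk.injEq]
      omega
    · have : (a + b + 1 + (a - b)) % 2 ≠ 0 := by omega
      simp only [Sum.elim_inr, this, if_false, Sum.inr.injEq, Prod.mk.injEq]
      omega
  right_inv := by
    rintro ⟨a, b⟩
    by_cases h : (a + b) % 2 = 0
    · simp only [h, if_true, Sum.elim_inl, Prod.mk.injEq]
      omega
    · simp only [h, if_false, Sum.elim_inr, Prod.mk.injEq]
      omega

lemma sSer_mul (p q r s : ℝ) (x y μ : ℂ) (hμ : 0 < μ.im) :
    sSer 0 p q (x+y) μ * sSer 0 r s (x-y) μ =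
    sSer 0 ((p+r)/2) (q+s) (2*x) (2*μ) * sSer 0 ((p-r)/2) (q-s) (2*y) (2*μ)
    + sSer 0 ((p+r+1)/2) (q+s) (2*x) (2*μ) * sSer 0 ((p-r+1)/2) (q-s) (2*y) (2*μ) := by
  have h2 : 0 < (2*μ).im := by simp [hμ]
  unfold sSer
  rw [tsum_mul_tsum_of_summable_norm (sTerm_summable 0 p q (x+y) μ hμ)
      (sTerm_summable 0 r s (x-y) μ hμ),
    tsum_mul_tsum_of_summable_norm (sTerm_summable 0 _ _ _ _ h2) (sTerm_summable 0 _ _ _ _ h2),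
    tsum_mul_tsum_of_summable_norm (sTerm_summable 0 _ _ _ _ h2) (sTerm_summable 0 _ _ _ _ h2),
    ← idxEquiv.tsum_eq]
  have hs := summable_mul_of_summable_norm (sTerm_summable 0 p q (x+y) μ hμ)
      (sTerm_summable 0 r s (x-y) μ hμ)
  rw [← idxEquiv.summable_iff] at hs
  have hl := hs.comp_injective (i := Sum.inl) Sum.inl_injective
  have hr := hs.comp_injective (i := Sum.inr) Sum.inr_injective
  have := Summable.tsum_sum hl hr
  simp only [Function.comp_def] at this
  rw [this]
  congr 1
  · refine tsum_congr fun a => ?_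
    simp only [idxEquiv, Equiv.coe_fn_mk, Sum.elim_inl, sTerm, pow_zero, one_mul, ← Complex.exp_add]
    congr 1
    push_cast
    ring
  · refine tsum_congr fun a => ?_
    simp only [idxEquiv, Equiv.coe_fn_mk, Sum.elim_inr, sTerm, pow_zero, one_mul, ← Complex.exp_add]
    congr 1
    push_cast
    ring

lemma sSer_odd (k : ℕ) (hk : Even k) (μ : ℂ) : sSer k (-(1/2)) (1/2) 0 μ = 0 := by
  have h : sSer k (-(1/2)) (1/2) 0 μ = - sSer k (-(1/2)) (1/2) 0 μ := by
    conv_lhs => rw [sSer, ← (Equiv.subLeft (1:ℤ)).tsum_eq]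
    rw [sSer, ← tsum_neg]
    refine tsum_congr fun m => ?_
    simp only [Equiv.subLeft_apply, sTerm]
    have e1 : (2 * (Real.pi : ℂ) * Complex.I * (((1 - m : ℤ) : ℂ) + ((-(1/2) : ℝ) : ℂ)))
        = -(2 * (Real.pi : ℂ) * Complex.I * ((m : ℂ) + ((-(1/2) : ℝ) : ℂ))) := by
      push_cast; ring
    rw [e1, hk.neg_pow]
    have e2 : -(2 * (Real.pi : ℂ) * Complex.I * ((m : ℂ) + ((-(1/2) : ℝ) : ℂ))) * (0 + ((1/2:ℝ):ℂ))
      = 2 * (Real.pi : ℂ) * Complex.I * ((m : ℂ) + ((-(1/2) : ℝ) : ℂ)) * (0 + ((1/2:ℝ):ℂ))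
        + Real.pi * Complex.I - m * (2 * Real.pi * Complex.I) := by
      push_cast; ring
    have e3 : (Real.pi : ℂ) * Complex.I * μ * (((1 - m : ℤ) : ℂ) + ((-(1/2) : ℝ) : ℂ))^2
      = (Real.pi : ℂ) * Complex.I * μ * ((m : ℂ) + ((-(1/2) : ℝ) : ℂ))^2 := by
      push_cast; ring
    rw [e2, e3, ← add_sub_assoc, Complex.exp_sub, Complex.exp_int_mul_two_pi_mul_I, ← add_assoc,
      Complex.exp_add _ (Real.pi * Complex.I), Complex.exp_pi_mul_I]
    ring
  exact self_eq_neg.mp h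

lemma det_lemma (t f : ℕ → ℂ → ℂ) (P0 P1 Q0 Q1 : ℂ → ℂ)
    (ht : ∀ k x, HasDerivAt (t k) (t (k+1) x) x) (hf : ∀ k x, HasDerivAt (f k) (f (k+1) x) x)
    (hP0 : Differentiable ℂ P0) (hP1 : Differentiable ℂ P1)
    (hQ0 : Differentiable ℂ Q0) (hQ1 : Differentiable ℂ Q1)
    (H : ∀ x y, t 0 (x+y) * f 0 (x-y) = P0 x * Q0 y + P1 x * Q1 y)
    (hf0 : f 0 0 = 0) (hf2 : f 2 0 = 0) (x : ℂ) :
    t 0 0 * f 1 0 * (t 0 0 * f 1 0 * (t 2 x * f 0 x - 2 * t 1 x * f 1 x + t 0 x * f 2 x)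
      - 2 * t 1 0 * f 1 0 * (t 1 x * f 0 x - t 0 x * f 1 x)
      + (t 2 0 * f 1 0 - f 3 0 * t 0 0) * (t 0 x * f 0 x)) = 0 := by
  have ty : ∀ k x y, HasDerivAt (fun y => t k (x+y)) (t (k+1) (x+y)) y := fun k x y =>
    HasDerivAt.comp_const_add x y (ht k (x+y))
  have fy : ∀ k x y, HasDerivAt (fun y => f k (x-y)) (-f (k+1) (x-y)) y := fun k x y =>
    HasDerivAt.comp_const_sub x y (hf k (x-y))
  have tx : ∀ k x y, HasDerivAt (fun x => t k (x+y)) (t (k+1) (x+y)) x := fun k x y =>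
    HasDerivAt.comp_add_const x y (ht k (x+y))
  have fx : ∀ k x y, HasDerivAt (fun x => f k (x-y)) (f (k+1) (x-y)) x := fun k x y =>
    HasDerivAt.comp_sub_const x y (hf k (x-y))
  have H1 : ∀ x y, t 1 (x+y) * f 0 (x-y) - t 0 (x+y) * f 1 (x-y)
      = P0 x * deriv Q0 y + P1 x * deriv Q1 y := by
    intro x y
    have a := (ty 0 x y).mul (fy 0 x y)
    have b := ((hQ0 y).hasDerivAt.const_mul (P0 x)).add ((hQ1 y).hasDerivAt.const_mul (P1 x))
    have e : (fun y => t 0 (x+y)) * (fun y => f 0 (x-y)) =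
      (fun y => P0 x * Q0 y) + fun y => P1 x * Q1 y := by
      funext y; exact H x y
    rw [e] at a
    have := a.unique b
    linear_combination this
  have H2 : ∀ x y, t 2 (x+y) * f 0 (x-y) - 2 * t 1 (x+y) * f 1 (x-y) + t 0 (x+y) * f 2 (x-y)
      = P0 x * deriv (deriv Q0) y + P1 x * deriv (deriv Q1) y := by
    intro x y
    have a := ((ty 1 x y).mul (fy 0 x y)).sub ((ty 0 x y).mul (fy 1 x y))
    have b := ((hQ0.deriv y).hasDerivAt.const_mul (P0 x)).add
      ((hQ1.deriv y).hasDerivAt.const_mul (P1 x))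
    have e : (fun y => t 1 (x+y)) * (fun y => f 0 (x-y)) - (fun y => t 0 (x+y)) * (fun y => f 1 (x-y))
      = (fun y => P0 x * deriv Q0 y) + fun y => P1 x * deriv Q1 y := by
      funext y; exact H1 x y
    rw [e] at a
    have := a.unique b
    linear_combination this
  have X0 : ∀ x y, t 1 (x+y) * f 0 (x-y) + t 0 (x+y) * f 1 (x-y)
      = deriv P0 x * Q0 y + deriv P1 x * Q1 y := by
    intro x y
    have a := (tx 0 x y).mul (fx 0 x y)
    have b := ((hP0 x).hasDerivAt.mul_const (Q0 y)).add ((hP1 x).hasDerivAt.mul_const (Q1 y))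
    have e : (fun x => t 0 (x+y)) * (fun x => f 0 (x-y)) =
      (fun x => P0 x * Q0 y) + fun x => P1 x * Q1 y := by
      funext x; exact H x y
    rw [e] at a
    have := a.unique b
    linear_combination this
  have X1 : ∀ x y, t 2 (x+y) * f 0 (x-y) - t 0 (x+y) * f 2 (x-y)
      = deriv P0 x * deriv Q0 y + deriv P1 x * deriv Q1 y := by
    intro x y
    have a := ((tx 1 x y).mul (fx 0 x y)).sub ((tx 0 x y).mul (fx 1 x y))
    have b := ((hP0 x).hasDerivAt.mul_const (deriv Q0 y)).add
      ((hP1 x).hasDerivAt.mul_const (deriv Q1 y))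
    have e : (fun x => t 1 (x+y)) * (fun x => f 0 (x-y)) - (fun x => t 0 (x+y)) * (fun x => f 1 (x-y))
      = (fun x => P0 x * deriv Q0 y) + fun x => P1 x * deriv Q1 y := by
      funext x; exact H1 x y
    rw [e] at a
    have := a.unique b
    linear_combination this
  have X2 : ∀ x y, t 3 (x+y) * f 0 (x-y) - t 2 (x+y) * f 1 (x-y) - t 1 (x+y) * f 2 (x-y)
      + t 0 (x+y) * f 3 (x-y)
      = deriv P0 x * deriv (deriv Q0) y + deriv P1 x * deriv (deriv Q1) y := by
    intro x y
    have a := (((tx 2 x y).mul (fx 0 x y)).sub (((tx 1 x y).mul (fx 1 x y)).const_mul 2)).add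
      ((tx 0 x y).mul (fx 2 x y))
    have b := ((hP0 x).hasDerivAt.mul_const (deriv (deriv Q0) y)).add
      ((hP1 x).hasDerivAt.mul_const (deriv (deriv Q1) y))
    have a' := a.congr_of_eventuallyEq
      (f₁ := (fun x => P0 x * deriv (deriv Q0) y) + fun x => P1 x * deriv (deriv Q1) y)
      (Filter.Eventually.of_forall fun x => by
        have := H2 x y
        simp only [Pi.add_apply, Pi.sub_apply, Pi.mul_apply]
        linear_combination -this)
    have := a'.unique b
    linear_combination this
  have a0 := H x 0
  have a1 := H1 x 0
  have a2 := H2 x 0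
  have b0 := H 0 0
  have b1 := H1 0 0
  have b2 := H2 0 0
  have c0 := X0 0 0
  have c1 := X1 0 0
  have c2 := X2 0 0
  simp only [add_zero, sub_zero, hf0, hf2, mul_zero, zero_sub, zero_add] at a0 a1 a2 b0 b1 b2 c0 c1 c2
  have key : ∀ p0 p1 r0 r1 s0 s1 u0 u1 v0 v1 w0 w1 : ℂ,
      (p0*u0+p1*u1) * ((r0*v0+r1*v1)*(s0*w0+s1*w1) - (r0*w0+r1*w1)*(s0*v0+s1*v1))
      - (p0*v0+p1*v1) * ((r0*u0+r1*u1)*(s0*w0+s1*w1) - (r0*w0+r1*w1)*(s0*u0+s1*u1))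
      + (p0*w0+p1*w1) * ((r0*u0+r1*u1)*(s0*v0+s1*v1) - (r0*v0+r1*v1)*(s0*u0+s1*u1)) = 0 := by
    intros; ring
  have := key (P0 x) (P1 x) (P0 0) (P1 0) (deriv P0 0) (deriv P1 0) (Q0 0) (Q1 0)
    (deriv Q0 0) (deriv Q1 0) (deriv (deriv Q0) 0) (deriv (deriv Q1) 0)
  rw [← a0, ← a1, ← a2, ← b0, ← b1, ← b2, ← c0, ← c1, ← c2] at this
  linear_combination this

/-- the bilinear expression that vanishes -/
noncomputable def gExpr (p q : ℝ) (γ μ : ℂ) : ℂ :=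
  let t : ℕ → ℂ → ℂ := fun k x => sSer k p q x μ
  let f : ℕ → ℂ → ℂ := fun k x => sSer k (-(1/2)) (1/2) x μ
  t 0 0 * f 1 0 * (t 2 γ * f 0 γ - 2 * t 1 γ * f 1 γ + t 0 γ * f 2 γ)
      - 2 * t 1 0 * f 1 0 * (t 1 γ * f 0 γ - t 0 γ * f 1 γ)
      + (t 2 0 * f 1 0 - f 3 0 * t 0 0) * (t 0 γ * f 0 γ)

lemma sSer_differentiable_two (p q : ℝ) (μ : ℂ) (hμ : 0 < μ.im) :
    Differentiable ℂ (fun x => sSer 0 p q (2*x) (2*μ)) := by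
  have h2 : 0 < (2*μ).im := by simp [hμ]
  have : Differentiable ℂ (fun x => sSer 0 p q x (2*μ)) :=
    fun x => (sSer_hasDerivAt_gamma 0 p q x (2*μ) h2).differentiableAt
  exact this.comp (differentiable_id.const_mul 2)

lemma gExpr_mul (p q : ℝ) (γ μ : ℂ) (hμ : 0 < μ.im) :
    sSer 0 p q 0 μ * sSer 1 (-(1/2)) (1/2) 0 μ * gExpr p q γ μ = 0 :=
  det_lemma (fun k x => sSer k p q x μ) (fun k x => sSer k (-(1/2)) (1/2) x μ) _ _ _ _
    (fun k x => sSer_hasDerivAt_gamma k p q x μ hμ)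
    (fun k x => sSer_hasDerivAt_gamma k _ _ x μ hμ)
    (sSer_differentiable_two _ _ μ hμ) (sSer_differentiable_two _ _ μ hμ)
    (sSer_differentiable_two _ _ μ hμ) (sSer_differentiable_two _ _ μ hμ)
    (fun x y => sSer_mul p q (-(1/2)) (1/2) x y μ hμ)
    (sSer_odd 0 (by decide) μ) (sSer_odd 2 (by decide) μ) γ

lemma sSer_continuousAt_mu (k : ℕ) (p q : ℝ) (γ μ : ℂ) (hμ : 0 < μ.im) :
    ContinuousAt (fun z => sSer k p q γ z) μ :=
  (sSer_hasDerivAt_mu k p q γ μ hμ).continuousAt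

lemma gExpr_continuousAt (p q : ℝ) (γ μ : ℂ) (hμ : 0 < μ.im) :
    ContinuousAt (fun z => gExpr p q γ z) μ := by
  have h := fun k p q γ => sSer_continuousAt_mu k p q γ μ hμ
  unfold gExpr
  have h1 := h 0 p q 0
  have h2 := h 1 p q 0
  have h3 := h 2 p q 0
  have h4 := h 0 p q γ
  have h5 := h 1 p q γ
  have h6 := h 2 p q γ
  have g1 := h 1 (-(1/2)) (1/2) 0
  have g2 := h 3 (-(1/2)) (1/2) 0
  have g3 := h 0 (-(1/2)) (1/2) γ
  have g4 := h 1 (-(1/2)) (1/2) γ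
  have g5 := h 2 (-(1/2)) (1/2) γ
  fun_prop

lemma eventually_im_pos (μ : ℂ) (hμ : 0 < μ.im) : ∀ᶠ z in nhds μ, 0 < z.im :=
  (isOpen_lt continuous_const Complex.continuous_im).mem_nhds hμ

lemma gExpr_eq_zero (p q : ℝ) (γ μ : ℂ) (hμ : 0 < μ.im) (h0 : sSer 0 p q 0 μ ≠ 0) :
    gExpr p q γ μ = 0 := by
  by_contra hne
  have e1 : ∀ᶠ z in nhds μ, sSer 1 (-(1/2)) (1/2) 0 z = 0 := by
    filter_upwards [eventually_im_pos μ hμ, (gExpr_continuousAt p q γ μ hμ).eventually_ne hne,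
      (sSer_continuousAt_mu 0 p q 0 μ hμ).eventually_ne h0] with z hz h1 h2
    have := gExpr_mul p q γ z hz
    simpa [h1, h2] using this
  have e2 := sSer_hasDerivAt_mu 1 (-(1/2)) (1/2) 0 μ hμ
  have e3 : HasDerivAt (fun z => sSer 1 (-(1/2)) (1/2) 0 z) 0 μ :=
    (hasDerivAt_const μ (0:ℂ)).congr_of_eventuallyEq e1
  have e4 := e2.unique e3
  have hpi : (Real.pi : ℂ) ≠ 0 := by exact_mod_cast Real.pi_ne_zero
  have e5 : sSer 3 (-(1/2)) (1/2) 0 μ = 0 := by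
    simpa [hpi] using e4
  apply hne
  simp only [gExpr, e1.self_of_nhds, e5]
  ring

/-- `∂_μ w_{AB}(γ;μ) = ∂_γ Z_{AB}(γ;μ)` (both derivatives exist). -/
theorem wAB_mu_deriv_eq_ZAB_gamma_deriv (K : ℕ) (hK : 2 ≤ K) (A B : ℤ)
    (hAB : ¬(A % (K : ℤ) = 0 ∧ B % (K : ℤ) = 0)) (γ μ : ℂ) (hμ : 0 < μ.im)
    (h00 : thetaAB K 0 0 γ μ ≠ 0) (hγ : thetaAB K A B γ μ ≠ 0)
    (h0 : thetaAB K A B 0 μ ≠ 0) :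
    DifferentiableAt ℂ (fun m => wAB K A B γ m) μ ∧
    DifferentiableAt ℂ (fun z => ZAB K A B z μ) γ ∧
    deriv (fun m => wAB K A B γ m) μ = deriv (fun z => ZAB K A B z μ) γ := by
  have hpi : (Real.pi : ℂ) ≠ 0 := by exact_mod_cast Real.pi_ne_zero
  set p : ℝ := (A : ℝ)/(K : ℝ) - 1/2 with hp
  set q : ℝ := 1/2 - (B : ℝ)/(K : ℝ) with hq
  have hT : ∀ z m, thetaAB K A B z m = sSer 0 p q z m := fun z m => Theta_eq_sSer _ _ _ _
  have hF : ∀ z m, thetaAB K 0 0 z m = sSer 0 (-(1/2)) (1/2) z m := fun z m => by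
    rw [thetaAB, Theta_eq_sSer]; simp
  rw [hF] at h00
  rw [hT] at hγ h0
  have hw : ∀ z m, 0 < m.im → wAB K A B z m = sSer 0 p q z m * sSer 1 (-(1/2)) (1/2) 0 m
      / (sSer 0 p q 0 m * sSer 0 (-(1/2)) (1/2) z m) := by
    intro z m hm
    simp only [wAB, hT, hF]
    rw [(sSer_hasDerivAt_gamma 0 _ _ 0 m hm).deriv]
  have hZ : ∀ z, ZAB K A B z μ = sSer 0 p q z μ * sSer 1 (-(1/2)) (1/2) 0 μ
      / (sSer 0 p q 0 μ * sSer 0 (-(1/2)) (1/2) z μ) / (2 * (Real.pi : ℂ) * Complex.I) *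
      (sSer 1 p q z μ / sSer 0 p q z μ - sSer 1 p q 0 μ / sSer 0 p q 0 μ) := by
    intro z
    simp only [ZAB, hw z μ hμ, hT]
    rw [(sSer_hasDerivAt_gamma 0 _ _ 0 μ hμ).deriv, (sSer_hasDerivAt_gamma 0 _ _ z μ hμ).deriv]
  have dw := ((sSer_hasDerivAt_mu 0 p q γ μ hμ).mul
    (sSer_hasDerivAt_mu 1 (-(1/2)) (1/2) 0 μ hμ)).div
    ((sSer_hasDerivAt_mu 0 p q 0 μ hμ).mul (sSer_hasDerivAt_mu 0 (-(1/2)) (1/2) γ μ hμ))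
    (mul_ne_zero h0 h00)
  have dw' := dw.congr_of_eventuallyEq (f₁ := fun m => wAB K A B γ m)
    ((eventually_im_pos μ hμ).mono fun m hm => hw γ m hm)
  have dZ := ((((sSer_hasDerivAt_gamma 0 p q γ μ hμ).mul_const
    (sSer 1 (-(1/2)) (1/2) 0 μ)).div
    ((sSer_hasDerivAt_gamma 0 (-(1/2)) (1/2) γ μ hμ).const_mul (sSer 0 p q 0 μ))
    (mul_ne_zero h0 h00)).div_const (2 * (Real.pi : ℂ) * Complex.I)).mul
    (((sSer_hasDerivAt_gamma 1 p q γ μ hμ).div (sSer_hasDerivAt_gamma 0 p q γ μ hμ) hγ).sub_const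
      (sSer 1 p q 0 μ / sSer 0 p q 0 μ))
  have dZ' := dZ.congr_of_eventuallyEq (f₁ := fun z => ZAB K A B z μ)
    (Filter.Eventually.of_forall fun z => hZ z)
  refine ⟨dw'.differentiableAt, dZ'.differentiableAt, ?_⟩
  rw [dw'.deriv, dZ'.deriv]
  have hG := gExpr_eq_zero p q γ μ hμ h0
  simp only [gExpr] at hG
  simp only [Pi.mul_apply, Pi.div_apply, zero_add, Nat.reduceAdd]
  generalize sSer 0 p q γ μ = t0 at *
  generalize sSer 1 p q γ μ = t1 at *
  generalize sSer 2 p q γ μ = t2 at *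
  generalize sSer 0 p q 0 μ = a0 at *
  generalize sSer 1 p q 0 μ = a1 at *
  generalize sSer 2 p q 0 μ = a2 at *
  generalize sSer 0 (-(1/2)) (1/2) γ μ = f0 at *
  generalize sSer 1 (-(1/2)) (1/2) γ μ = f1 at *
  generalize sSer 2 (-(1/2)) (1/2) γ μ = f2 at *
  generalize sSer 1 (-(1/2)) (1/2) 0 μ = c1 at *
  generalize sSer 3 (-(1/2)) (1/2) 0 μ = c3 at *
  clear dw dw' dZ dZ' hw hZ hT hF
  have hI := Complex.I_ne_zero
  rw [← sub_eq_zero]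
  have : ∀ X Y : ℂ, X - Y = -(a0 * c1 * (t2 * f0 - 2 * t1 * f1 + t0 * f2)
      - 2 * a1 * c1 * (t1 * f0 - t0 * f1)
      + (a2 * c1 - c3 * a0) * (t0 * f0)) / (4 * Real.pi * Complex.I * a0^2 * f0^2) → X - Y = 0 := by
    intro X Y h
    rw [h, hG]; simp
  apply this
  field_simp
  ring
end

section
/- Let K ≥ 2 be an integer, μ ∈ ℂ with Im μ > 0, and γ ∈ ℂ such that θ_{[00]}(γ;μ) ≠ 0 and θ_{[AB]}(0;μ) ≠ 0 for all 0 ≤ A,B ≤ K−1 with (A,B) ≠ (0,0). Then the elliptic r-matrix is antisymmetric under simultaneous exchange of tensor factors and sign change of the argument: ∑_{0≤A,B≤K−1,(A,B)≠(0,0)} w_{AB}(γ;μ)·(σ_{AB} ⊗ σ^{AB}) = −∑_{0≤A,B≤K−1,(A,B)≠(0,0)} w_{AB}(−γ;μ)·(σ^{AB} ⊗ σ_{AB}), i.e. r^{12}(γ) = −r^{21}(−γ). -/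
open Complex Filter

lemma Theta_neg_shift (p q p' q' : ℝ) (k n : ℤ) (hp : p' = -(p + k)) (hq : q' = -(q + n))
    (γ μ : ℂ) : Theta p' q' (-γ) μ
      = Complex.exp (2 * (Real.pi : ℂ) * Complex.I * p * n) * Theta p q γ μ := by
  unfold Theta
  rw [← tsum_mul_left]
  rw [← ((Equiv.subLeft k).tsum_eq (fun m : ℤ => Complex.exp
    ((Real.pi : ℂ) * Complex.I * μ * ((m : ℂ) + (p' : ℂ))^2
    + 2 * (Real.pi : ℂ) * Complex.I * ((m : ℂ) + (p' : ℂ)) * (-γ + (q' : ℂ)))))]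
  refine tsum_congr fun m => ?_
  rw [← Complex.exp_add, Complex.exp_eq_exp_iff_exists_int]
  refine ⟨m * n, ?_⟩
  subst hp hq
  simp only [Equiv.subLeft_apply]
  push_cast
  ring

lemma thetaAB_neg (K : ℕ) (hK : 2 ≤ K) (A B A' B' a b : ℤ) (hA : A' = -A + K * a)
    (hB : B' = -B + K * b) (γ μ : ℂ) : thetaAB K A' B' (-γ) μ
      = Complex.exp (2 * (Real.pi : ℂ) * Complex.I * (((A : ℝ)/(K : ℝ) - 1/2 : ℝ) : ℂ)
          * ((b - 1 : ℤ) : ℂ)) * thetaAB K A B γ μ := by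
  have hK0 : (K : ℝ) ≠ 0 := by positivity
  unfold thetaAB
  apply Theta_neg_shift _ _ _ _ (1 - a) (b - 1)
  · subst hA; push_cast; field_simp; ring
  · subst hB; push_cast; field_simp; ring

lemma theta00_neg (K : ℕ) (hK : 2 ≤ K) (γ μ : ℂ) :
    thetaAB K 0 0 (-γ) μ = - thetaAB K 0 0 γ μ := by
  rw [thetaAB_neg K hK 0 0 0 0 0 0 (by simp) (by simp)]
  have : (2 * (Real.pi : ℂ) * Complex.I * ((((0 : ℤ) : ℝ)/(K : ℝ) - 1/2 : ℝ) : ℂ)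
          * ((0 - 1 : ℤ) : ℂ)) = Real.pi * Complex.I := by
    push_cast; ring
  rw [this, Complex.exp_pi_mul_I]; ring

lemma wAB_neg (K : ℕ) (hK : 2 ≤ K) (A B A' B' a b : ℤ) (hA : A' = -A + K * a)
    (hB : B' = -B + K * b) (γ μ : ℂ) : wAB K A' B' (-γ) μ = - wAB K A B γ μ := by
  have h0 := thetaAB_neg K hK A B A' B' a b hA hB 0 μ
  rw [neg_zero] at h0
  unfold wAB
  rw [h0, thetaAB_neg K hK A B A' B' a b hA hB γ μ, theta00_neg K hK]
  generalize hc : Complex.exp _ = c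
  have hc0 : c ≠ 0 := hc ▸ Complex.exp_ne_zero _
  rw [mul_assoc, mul_assoc,
    mul_div_mul_left _ _ hc0, mul_neg, div_neg]

lemma sigmaAB_congr (K : ℕ) (A B A' B' : ℤ) (hA : A' ≡ A [ZMOD K]) (hB : B' ≡ B [ZMOD K]) :
    sigmaAB K A' B' = sigmaAB K A B := by
  unfold sigmaAB
  rw [hA.eq, hB.eq]

lemma epsK_zpow_mul (K : ℕ) (hK : 2 ≤ K) (x c : ℤ) : epsK K ^ (x + K * c) = epsK K ^ x := by
  have hK0 : (K : ℂ) ≠ 0 := by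
    have : K ≠ 0 := by omega
    exact_mod_cast this
  have h1 : epsK K ^ K = 1 := by
    unfold epsK
    rw [← Complex.exp_nat_mul, mul_div_cancel₀ _ hK0, Complex.exp_two_pi_mul_I]
  have h2 : epsK K ≠ 0 := Complex.exp_ne_zero _
  rw [zpow_add₀ h2, zpow_mul, zpow_natCast, h1, one_zpow, mul_one]

lemma sum_range_reflect_mod {M : Type*} [AddCommMonoid M] (K : ℕ) (f : ℕ → M) :
    ∑ A ∈ Finset.range K, f A = ∑ A ∈ Finset.range K, f ((K - A) % K) := by
  have key : ∀ a ∈ Finset.range K, (K - (K - a) % K) % K = a := by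
    intro a ha
    rw [Finset.mem_range] at ha
    rcases Nat.eq_zero_or_pos a with h | h
    · subst h; simp
    · rw [Nat.mod_eq_of_lt (show K - a < K by omega), Nat.mod_eq_of_lt (by omega)]; omega
  have hm : ∀ a ∈ Finset.range K, (K - a) % K ∈ Finset.range K := by
    intro a ha
    rw [Finset.mem_range] at *
    exact Nat.mod_lt _ (by omega)
  exact Finset.sum_nbij' (fun a => (K - a) % K) (fun a => (K - a) % K) hm hm key key
    (fun a ha => by rw [key a ha])

lemma refl_mod_spec (K A : ℕ) (hA : A < K) :
    ∃ a : ℤ, (((K - A) % K : ℕ) : ℤ) = -(A : ℤ) + K * a ∧ ((K - A) % K = 0 ↔ A = 0) := by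
  rcases Nat.eq_zero_or_pos A with h | h
  · subst h; exact ⟨0, by simp⟩
  · rw [Nat.mod_eq_of_lt (show K - A < K by omega)]
    exact ⟨1, by push_cast [hA.le]; ring, by omega⟩

open Kronecker in
/-- antisymmetry of the elliptic r-matrix: `r^{12}(γ) = −r^{21}(−γ)`. -/
theorem rmat_antisymmetry (K : ℕ) (hK : 2 ≤ K) (μ γ : ℂ) (hμ : 0 < μ.im)
    (h00 : thetaAB K 0 0 γ μ ≠ 0)
    (h0 : ∀ A B : ℕ, A < K → B < K → ¬(A = 0 ∧ B = 0) → thetaAB K A B 0 μ ≠ 0) :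
    (∑ A ∈ Finset.range K, ∑ B ∈ Finset.range K,
        if A = 0 ∧ B = 0 then 0
        else wAB K A B γ μ • (sigmaAB K A B ⊗ₖ sigmaDualAB K A B))
      = -∑ A ∈ Finset.range K, ∑ B ∈ Finset.range K,
          if A = 0 ∧ B = 0 then 0
          else wAB K A B (-γ) μ • (sigmaDualAB K A B ⊗ₖ sigmaAB K A B) := by
  rw [← Finset.sum_neg_distrib]
  rw [sum_range_reflect_mod K (fun A => -∑ B ∈ Finset.range K,
          if A = 0 ∧ B = 0 then 0
          else wAB K A B (-γ) μ • (sigmaDualAB K A B ⊗ₖ sigmaAB K A B))]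
  refine Finset.sum_congr rfl fun A hA => ?_
  rw [← Finset.sum_neg_distrib]
  rw [sum_range_reflect_mod K (fun B => -
          if (K - A) % K = 0 ∧ B = 0 then 0
          else wAB K ((K - A) % K : ℕ) B (-γ) μ •
            (sigmaDualAB K ((K - A) % K : ℕ) B ⊗ₖ sigmaAB K ((K - A) % K : ℕ) B))]
  refine Finset.sum_congr rfl fun B hB => ?_
  obtain ⟨a, ha, ha0⟩ := refl_mod_spec K A (Finset.mem_range.mp hA)
  obtain ⟨b, hb, hb0⟩ := refl_mod_spec K B (Finset.mem_range.mp hB)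
  simp only [ha0, hb0]
  split_ifs with h
  · simp
  · rw [wAB_neg K hK A B _ _ a b ha hb, ha, hb, neg_smul, neg_neg]
    congr 1
    unfold sigmaDualAB
    have m1 : ∀ x c : ℤ, x + K * c ≡ x [ZMOD K] := fun x c => by
      simp [Int.ModEq]
    rw [sigmaAB_congr K (-A) (-B) _ _ (m1 _ a) (m1 _ b),
      sigmaAB_congr K A B (-(-(A:ℤ) + K * a)) (-(-(B:ℤ) + K * b))
        (by convert m1 A (-a) using 1; ring) (by convert m1 B (-b) using 1; ring),
      show -((-(A:ℤ) + K * a) * (-(B:ℤ) + K * b))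
        = -((A:ℤ) * B) + K * (A * b + a * B - K * a * b) by ring,
      epsK_zpow_mul K hK, Matrix.kronecker_smul, Matrix.smul_kronecker]
end

section
/- Let K ≥ 2 be an integer and A,B integers with (A,B) not both ≡ 0 mod K, and let μ ∈ ℂ with Im μ > 0. For all γ, z, g ∈ ℂ such that θ_{[00]} does not vanish at γ−z, z−g, γ−g and g−z, θ_{[AB]}(γ−z;μ) ≠ 0 and θ_{[AB]}(0;μ) ≠ 0, the following identity holds: w_{AB}(γ−z;μ)·(ρ(z−g;μ) − ρ(γ−g;μ)) + 2πi·Z_{AB}(γ−z;μ) = −w_{AB}(g−z;μ)·w_{AB}(γ−g;μ). -/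
open Complex Filter

/-- base odd theta -/
noncomputable def th0 (μ x : ℂ) : ℂ := Theta (-1/2) (1/2) x μ

theorem theta_eq_jacobi (p q : ℝ) (x μ : ℂ) : Theta p q x μ =
    Complex.exp ((Real.pi : ℂ) * Complex.I * μ * (p:ℂ)^2 + 2 * (Real.pi : ℂ) * Complex.I * p * (x + q))
      * jacobiTheta₂ (x + q + p * μ) μ := by
  unfold Theta jacobiTheta₂ jacobiTheta₂_term
  rw [← tsum_mul_left]
  refine tsum_congr fun m => ?_
  rw [← Complex.exp_add]
  congr 1
  ring

theorem theta_summable (p q : ℝ) (x μ : ℂ) (hμ : 0 < μ.im) :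
    Summable fun m : ℤ => Complex.exp ((Real.pi : ℂ) * Complex.I * μ * ((m : ℂ) + (p : ℂ))^2
    + 2 * (Real.pi : ℂ) * Complex.I * ((m : ℂ) + (p : ℂ)) * (x + (q : ℂ))) := by
  have h := (hasSum_jacobiTheta₂_term (x + q + p * μ) hμ).summable.mul_left
    (Complex.exp ((Real.pi : ℂ) * Complex.I * μ * (p:ℂ)^2 + 2 * (Real.pi : ℂ) * Complex.I * p * (x + q)))
  refine h.congr fun m => ?_
  unfold jacobiTheta₂_term
  rw [← Complex.exp_add]
  congr 1
  ring

theorem th0_diff (μ : ℂ) (hμ : 0 < μ.im) : Differentiable ℂ (th0 μ) := by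
  intro x
  have : th0 μ = fun x => Complex.exp ((Real.pi : ℂ) * Complex.I * μ * (((-1/2 : ℝ)):ℂ)^2 + 2 * (Real.pi : ℂ) * Complex.I * ((-1/2 : ℝ) : ℂ) * (x + ((1/2 : ℝ) : ℂ)))
      * jacobiTheta₂ (x + ((1/2 : ℝ) : ℂ) + ((-1/2 : ℝ) : ℂ) * μ) μ := by
    funext x; exact theta_eq_jacobi _ _ _ _
  rw [this]
  refine DifferentiableAt.mul (by fun_prop) ?_
  exact DifferentiableAt.comp (g := fun z => jacobiTheta₂ z μ) x
    (differentiableAt_jacobiTheta₂_fst _ hμ) (by fun_prop)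

theorem theta_half (x μ : ℂ) : Theta (1/2) (1/2) x μ = th0 μ x := by
  unfold th0 Theta
  symm
  rw [← (Equiv.addRight (1:ℤ)).tsum_eq]
  refine tsum_congr fun m => ?_
  congr 1
  simp only [Equiv.coe_addRight]
  push_cast
  ring

theorem th0_odd (μ x : ℂ) : th0 μ (-x) = - th0 μ x := by
  unfold th0 Theta
  rw [← (Equiv.subLeft (1:ℤ)).tsum_eq, ← tsum_neg]
  refine tsum_congr fun m => ?_
  simp only [Equiv.subLeft_apply]
  have h : Complex.exp ((m:ℤ) * (2 * (Real.pi:ℂ) * Complex.I)) = 1 := Complex.exp_int_mul_two_pi_mul_I m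
  have h2 := Complex.exp_pi_mul_I
  have hE : ∀ E : ℂ, -Complex.exp E
      = Complex.exp (E + Real.pi * Complex.I + -((m:ℤ) * (2 * (Real.pi:ℂ) * Complex.I))) := by
    intro E
    rw [Complex.exp_add, Complex.exp_add, Complex.exp_neg, h, h2]
    ring
  rw [hE]
  congr 1
  push_cast
  ring

/-- exponential term -/
noncomputable def tt (μ : ℂ) (k : ℤ) (x : ℂ) : ℂ :=
  Complex.exp ((Real.pi : ℂ) * Complex.I * μ * (k:ℂ)^2 / 2 + 2 * (Real.pi : ℂ) * Complex.I * k * x)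

theorem tt_even_summable (μ : ℂ) (hμ : 0 < μ.im) (x : ℂ) : Summable fun i : ℤ => tt μ (2*i) x := by
  have h2 : 0 < (2*μ).im := by simpa using hμ
  refine (theta_summable 0 0 (2*x) (2*μ) h2).congr fun m => ?_
  unfold tt
  congr 1
  push_cast
  ring

theorem tt_odd_summable (μ : ℂ) (hμ : 0 < μ.im) (x : ℂ) : Summable fun i : ℤ => tt μ (2*i+1) x := by
  have h2 : 0 < (2*μ).im := by simpa using hμ
  refine (theta_summable (1/2) 0 (2*x) (2*μ) h2).congr fun m => ?_
  unfold tt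
  congr 1
  push_cast
  ring

/-- parity reindexing -/
noncomputable def parEquiv : (ℤ × ℤ) ⊕ (ℤ × ℤ) ≃ ℤ × ℤ :=
  Equiv.ofBijective
    (Sum.elim (fun p => (p.1 + p.2 + 1, p.1 - p.2)) (fun p => (p.1 + p.2 + 1, p.1 - p.2 + 1))) (by
    constructor
    · rintro (⟨a, b⟩ | ⟨a, b⟩) (⟨c, d⟩ | ⟨c, d⟩) h <;>
        simp only [Sum.elim_inl, Sum.elim_inr, Prod.mk.injEq] at h <;>
        simp <;> omega
    · rintro ⟨m, n⟩
      rcases Int.even_or_odd (m + n) with h | h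
      · obtain ⟨k, hk⟩ := h
        exact ⟨Sum.inr (k - 1, m - k), by simp; omega⟩
      · obtain ⟨k, hk⟩ := h
        exact ⟨Sum.inl (k, m - 1 - k), by simp; omega⟩)

theorem prod_split (f g u v u' v' : ℤ → ℂ) (hf : Summable f) (hg : Summable g)
    (hu : Summable u) (hv : Summable v) (hu' : Summable u') (hv' : Summable v')
    (h1 : ∀ i j, f (i + j + 1) * g (i - j) = u i * v j)
    (h2 : ∀ i j, f (i + j + 1) * g (i - j + 1) = -(u' i * v' j)) :
    (∑' i, f i) * (∑' i, g i) = (∑' i, u i) * (∑' i, v i) - (∑' i, u' i) * (∑' i, v' i) := by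
  have H1 : HasSum (fun p : ℤ × ℤ => u p.1 * v p.2) _ :=
    hu.hasSum.mul hv.hasSum (summable_mul_of_summable_norm hu.norm hv.norm)
  have H2 : HasSum (fun p : ℤ × ℤ => -(u' p.1 * v' p.2)) _ :=
    (hu'.hasSum.mul hv'.hasSum (summable_mul_of_summable_norm hu'.norm hv'.norm)).neg
  have H : HasSum (fun p : ℤ × ℤ => f p.1 * g p.2) _ :=
    hf.hasSum.mul hg.hasSum (summable_mul_of_summable_norm hf.norm hg.norm)
  rw [← parEquiv.hasSum_iff] at H
  refine H.unique ?_
  rw [sub_eq_add_neg]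
  refine HasSum.sum ?_ ?_
  · refine H1.congr_fun ?_
    rintro ⟨i, j⟩
    exact h1 i j
  · refine H2.congr_fun ?_
    rintro ⟨i, j⟩
    exact h2 i j

theorem th0_mul (μ : ℂ) (hμ : 0 < μ.im) (x y : ℂ) : th0 μ (x + y) * th0 μ (x - y) =
    (∑' i : ℤ, tt μ (2*i) x) * (∑' i : ℤ, tt μ (2*i+1) y)
    - (∑' i : ℤ, tt μ (2*i+1) x) * (∑' i : ℤ, tt μ (2*i) y) := by
  unfold th0 Theta
  refine prod_split _ _ _ _ _ _ (theta_summable (-1/2) (1/2) (x+y) μ hμ)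
    (theta_summable (-1/2) (1/2) (x-y) μ hμ) (tt_even_summable μ hμ x) (tt_odd_summable μ hμ y)
    (tt_odd_summable μ hμ x) (tt_even_summable μ hμ y) ?_ ?_
  · intro i j
    have h : Complex.exp ((i:ℤ) * (2 * (Real.pi:ℂ) * Complex.I)) = 1 :=
      Complex.exp_int_mul_two_pi_mul_I i
    have hE : ∀ E : ℂ, Complex.exp E
        = Complex.exp (E + (i:ℤ) * (2 * (Real.pi:ℂ) * Complex.I)) := by
      intro E
      rw [Complex.exp_add, h, mul_one]
    unfold tt
    rw [← Complex.exp_add, ← Complex.exp_add]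
    symm
    refine (hE _).trans ?_
    congr 1
    push_cast
    ring
  · intro i j
    have h : Complex.exp ((i:ℤ) * (2 * (Real.pi:ℂ) * Complex.I)) = 1 :=
      Complex.exp_int_mul_two_pi_mul_I i
    have hE : ∀ E : ℂ, -Complex.exp E
        = Complex.exp (E + Real.pi * Complex.I + (i:ℤ) * (2 * (Real.pi:ℂ) * Complex.I)) := by
      intro E
      rw [Complex.exp_add, Complex.exp_add, h, Complex.exp_pi_mul_I]
      ring
    unfold tt
    rw [← Complex.exp_add, ← Complex.exp_add, hE]
    congr 1
    push_cast
    ring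

theorem fay_abs (f : ℂ → ℂ) (hf : Differentiable ℂ f) (hodd : ∀ x, f (-x) = - f x)
    (P Q : ℂ → ℂ) (hPQ : ∀ x y, f (x + y) * f (x - y) = P x * Q y - Q x * P y) (x y e : ℂ) :
    f (x + e) * f (y + e) * f (x + y) * deriv f 0 =
      deriv f x * f y * f e * f (x + y + e) + f x * deriv f y * f e * f (x + y + e)
      + f x * f y * deriv f e * f (x + y + e) - f x * f y * f e * deriv f (x + y + e) := by
  obtain ⟨a, b, d, rfl, rfl, rfl⟩ : ∃ a b d : ℂ, x = a + d ∧ y = d - a ∧ e = b - d :=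
    ⟨(x - y)/2, e + (x+y)/2, (x+y)/2, by ring, by ring, by ring⟩
  have hF : ∀ c, (f (a+b) * f (a-b)) * (f (c+d) * f (c-d)) + (f (b+c) * f (b-c)) * (f (a+d) * f (a-d))
      + (f (c+a) * f (c-a)) * (f (b+d) * f (b-d)) = 0 := by
    intro c
    simp only [hPQ]
    ring
  have hp : ∀ u, HasDerivAt (fun c => f (c + u)) (deriv f (d + u)) d := fun u =>
    (hf (d+u)).hasDerivAt.comp_add_const d u
  have hp' : ∀ u, HasDerivAt (fun c => f (u + c)) (deriv f (u + d)) d := fun u =>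
    (hf (u+d)).hasDerivAt.comp_const_add u d
  have hm : ∀ u, HasDerivAt (fun c => f (c - u)) (deriv f (d - u)) d := fun u =>
    (hf (d-u)).hasDerivAt.comp_sub_const d u
  have hm' : ∀ u, HasDerivAt (fun c => f (u - c)) (-deriv f (u - d)) d := fun u =>
    (hf (u-d)).hasDerivAt.comp_const_sub u d
  have D := ((((hp d).mul (hm d)).const_mul (f (a+b) * f (a-b))).add
    (((hp' b).mul (hm' b)).mul_const (f (a+d) * f (a-d)))).add
    (((hp a).mul (hm a)).mul_const (f (b+d) * f (b-d)))
  have D0 := D.unique ((hasDerivAt_const d (0:ℂ)).congr_of_eventuallyEq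
    (Filter.Eventually.of_forall fun c => by simpa using hF c))
  have f0 : f 0 = 0 := by
    have := hodd 0
    rw [neg_zero] at this
    exact CharZero.eq_neg_self_iff.mp this
  have r1 : f (a - d) = - f (d - a) := by rw [← hodd]; ring_nf
  have r2 : f (a - b) = - f (b - a) := by rw [← hodd]; ring_nf
  rw [r1, r2, sub_self, f0, add_comm d a] at D0
  have s1 : a + d + (b - d) = a + b := by ring
  have s2 : d - a + (b - d) = b - a := by ring
  have s3 : a + d + (d - a) = d + d := by ring
  have s4 : d + d + (b - d) = b + d := by ring
  rw [s1, s2, s3, s4]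
  linear_combination (-1) * D0

theorem thetaAB_eq (K : ℕ) (A B : ℤ) (μ : ℂ) : ∃ C c e : ℂ, C ≠ 0 ∧
    ∀ x, thetaAB K A B x μ = C * Complex.exp (c * x) * th0 μ (x + e) := by
  refine ⟨Complex.exp ((Real.pi : ℂ) * Complex.I * μ * ((A:ℂ)/K)^2
    + 2 * (Real.pi : ℂ) * Complex.I * ((A:ℂ)/K) * (1/2 - (B:ℂ)/K)),
    2 * (Real.pi : ℂ) * Complex.I * ((A:ℂ)/K), (A:ℂ)/K * μ - (B:ℂ)/K, Complex.exp_ne_zero _, ?_⟩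
  intro x
  unfold thetaAB th0 Theta
  rw [← Complex.exp_add, ← tsum_mul_left]
  refine tsum_congr fun m => ?_
  rw [← Complex.exp_add]
  congr 1
  push_cast
  ring

theorem thetaAB_zero (K : ℕ) (x μ : ℂ) : thetaAB K 0 0 x μ = th0 μ x := by
  unfold thetaAB th0
  norm_num

/-- the identity
`w_{AB}(γ−z)(ρ(z−g) − ρ(γ−g)) + 2πi·Z_{AB}(γ−z) = −w_{AB}(g−z)·w_{AB}(γ−g)`. -/
theorem wAB_rho_ZAB_identity (K : ℕ) (hK : 2 ≤ K) (A B : ℤ)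
    (hAB : ¬(A % (K : ℤ) = 0 ∧ B % (K : ℤ) = 0)) (μ : ℂ) (hμ : 0 < μ.im)
    (γ z g : ℂ)
    (h1 : thetaAB K 0 0 (γ - z) μ ≠ 0) (h2 : thetaAB K 0 0 (z - g) μ ≠ 0)
    (h3 : thetaAB K 0 0 (γ - g) μ ≠ 0) (h4 : thetaAB K 0 0 (g - z) μ ≠ 0)
    (h5 : thetaAB K A B (γ - z) μ ≠ 0) (h6 : thetaAB K A B 0 μ ≠ 0) :
    wAB K A B (γ - z) μ * (rho (z - g) μ - rho (γ - g) μ)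
        + 2 * (Real.pi : ℂ) * Complex.I * ZAB K A B (γ - z) μ
      = -(wAB K A B (g - z) μ * wAB K A B (γ - g) μ) := by
  obtain ⟨C, c, e, hC, hth⟩ := thetaAB_eq K A B μ
  have hdf := th0_diff μ hμ
  have hodd := th0_odd μ
  have fay := fay_abs (th0 μ) hdf hodd _ _ (th0_mul μ hμ) (γ - g) (g - z) e
  have hrho : ∀ x, rho x μ = deriv (th0 μ) x / th0 μ x := by
    intro x
    have : (fun z => theta1 z μ) = fun z => - th0 μ z := by
      funext z; rw [theta1, theta_half]
    rw [rho, this, theta1, theta_half, deriv.fun_neg, neg_div_neg_eq]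
  have hderiv : ∀ x, deriv (fun z => thetaAB K A B z μ) x
      = C * Complex.exp (c * x) * (c * th0 μ (x + e) + deriv (th0 μ) (x + e)) := by
    intro x
    have h1 : (fun z => thetaAB K A B z μ) = fun z => C * Complex.exp (c * z) * th0 μ (z + e) :=
      funext hth
    rw [h1]
    have h2 : HasDerivAt (fun z : ℂ => C * Complex.exp (c * z)) (C * (Complex.exp (c * x) * c)) x := by
      have := (((hasDerivAt_id x).const_mul c).cexp).const_mul C
      simpa using this
    rw [(h2.fun_mul ((hdf (x+e)).hasDerivAt.comp_add_const x e)).deriv]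
    ring
  have h0f : (fun z => thetaAB K 0 0 z μ) = th0 μ := funext fun z => thetaAB_zero K z μ
  have hdodd : ∀ x, deriv (th0 μ) (-x) = deriv (th0 μ) x := by
    intro x
    have h := deriv_comp_neg (th0 μ) x
    have h2 : (fun x => th0 μ (-x)) = fun x => - th0 μ x := funext hodd
    rw [h2, deriv.fun_neg] at h
    linear_combination h
  have hzg : z - g = -(g - z) := by ring
  have hgz : γ - z = (γ - g) + (g - z) := by ring
  have hpi : (2 * (Real.pi : ℂ) * Complex.I) ≠ 0 := Complex.two_pi_I_ne_zero
  rw [ZAB, ← mul_assoc, mul_div_cancel₀ _ hpi]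
  simp only [wAB, hrho, hderiv, h0f]
  rw [thetaAB_zero] at h1 h2 h3 h4
  simp only [thetaAB_zero, hth] at h5 h6 ⊢
  rw [hzg, hodd, hdodd]
  rw [hgz] at h1 h5 ⊢
  generalize γ - g = X at *
  generalize g - z = Y at *
  clear hrho hderiv h0f hdodd hodd hdf hth hzg hgz h2
  simp only [mul_zero, Complex.exp_zero, zero_add, mul_one, mul_add c X Y, Complex.exp_add] at h5 h6 ⊢
  have hX := Complex.exp_ne_zero (c * X)
  have hY := Complex.exp_ne_zero (c * Y)
  generalize Complex.exp (c * X) = EX at *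
  generalize Complex.exp (c * Y) = EY at *
  have h5' := right_ne_zero_of_mul h5
  have h6' := right_ne_zero_of_mul h6
  generalize deriv (th0 μ) 0 = D0 at *
  generalize deriv (th0 μ) X = DX at *
  generalize deriv (th0 μ) Y = DY at *
  generalize deriv (th0 μ) e = De at *
  generalize deriv (th0 μ) (X + Y + e) = Ds at *
  generalize th0 μ (X + Y + e) = fs at *
  generalize th0 μ (X + Y) = fXY at *
  generalize th0 μ (X + e) = fXe at *
  generalize th0 μ (Y + e) = fYe at *
  generalize th0 μ X = fX at *
  generalize th0 μ Y = fY at *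
  generalize th0 μ e = fe at *
  clear h5 h6
  field_simp
  linear_combination D0 * fay
end

section
/- Let K ≥ 2 be an integer and A,B integers with (A,B) not both ≡ 0 mod K, and let μ ∈ ℂ with Im μ > 0. For all γ, z₁, z₂ ∈ ℂ such that θ_{[00]} does not vanish at z₁−z₂, z₂−γ, z₁−γ, γ−z₂ and γ−z₁, θ_{[AB]}(z₁−z₂;μ) ≠ 0, θ_{[AB]}(0;μ) ≠ 0 and θ_{[−A,−B]}(0;μ) ≠ 0, the following identity holds: w_{AB}(z₁−z₂;μ)·(ρ(z₂−γ;μ) − ρ(z₁−γ;μ)) = w_{AB}(γ−z₂;μ)·w_{−A,−B}(γ−z₁;μ) − 2πi·Z_{AB}(z₁−z₂;μ). -/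
open Complex Filter

/-- The odd theta function. -/
noncomputable def thOdd (x μ : ℂ) : ℂ :=
  ∑' m : ℤ, Complex.exp ((Real.pi : ℂ) * Complex.I * μ * ((m : ℂ) - 1/2)^2
    + 2 * (Real.pi : ℂ) * Complex.I * ((m : ℂ) - 1/2) * (x + 1/2))

noncomputable def thTerm (μ x : ℂ) (m : ℤ) : ℂ :=
  Complex.exp ((Real.pi : ℂ) * Complex.I * μ * ((m : ℂ) - 1/2)^2
    + 2 * (Real.pi : ℂ) * Complex.I * ((m : ℂ) - 1/2) * (x + 1/2))

lemma thTerm_eq (μ x : ℂ) (m : ℤ) : thTerm μ x m =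
    Complex.exp (Real.pi * I * μ / 4 - Real.pi * I * (x + 1/2))
      * jacobiTheta₂_term m (x + 1/2 - μ/2) μ := by
  rw [thTerm, jacobiTheta₂_term, ← Complex.exp_add]
  congr 1
  ring

lemma thOdd_eq (μ x : ℂ) : thOdd x μ =
    Complex.exp (Real.pi * I * μ / 4 - Real.pi * I * (x + 1/2))
      * jacobiTheta₂ (x + 1/2 - μ/2) μ := by
  rw [jacobiTheta₂, ← tsum_mul_left]
  exact tsum_congr (fun m => thTerm_eq μ x m)

lemma summable_thTerm (μ x : ℂ) (hμ : 0 < μ.im) : Summable (thTerm μ x) := by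
  have := ((summable_jacobiTheta₂_term_iff (x + 1/2 - μ/2) μ).2 hμ).mul_left
    (Complex.exp (Real.pi * I * μ / 4 - Real.pi * I * (x + 1/2)))
  exact this.congr (fun m => (thTerm_eq μ x m).symm)

lemma differentiable_thOdd (μ : ℂ) (hμ : 0 < μ.im) : Differentiable ℂ (fun x => thOdd x μ) := by
  intro x
  simp_rw [thOdd_eq]
  refine DifferentiableAt.mul (by fun_prop) ?_
  exact (differentiableAt_jacobiTheta₂_fst (x + 1/2 - μ/2) hμ).comp x
    (f := fun x : ℂ => x + 1/2 - μ/2) (by fun_prop)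

noncomputable def eTerm (μ a : ℂ) (k : ℤ) : ℂ := jacobiTheta₂_term k (2*a) (2*μ)
noncomputable def oTerm (μ a : ℂ) (k : ℤ) : ℂ :=
  Complex.exp (Real.pi * I * μ / 2 + 2 * Real.pi * I * a) * jacobiTheta₂_term k (2*a+μ) (2*μ)

lemma summable_eTerm (μ x : ℂ) (hμ : 0 < μ.im) : Summable (eTerm μ x) :=
  (summable_jacobiTheta₂_term_iff (2*x) (2*μ)).2 (by simpa using hμ)

lemma summable_oTerm (μ x : ℂ) (hμ : 0 < μ.im) : Summable (oTerm μ x) :=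
  ((summable_jacobiTheta₂_term_iff (2*x+μ) (2*μ)).2 (by simpa using hμ)).mul_left _

def idxMap : (ℤ × ℤ) ⊕ (ℤ × ℤ) → ℤ × ℤ
  | Sum.inl p => (p.1 + p.2 + 1, p.1 - p.2)
  | Sum.inr p => (p.1 + p.2 + 1, p.1 - p.2 + 1)

lemma idxMap_bij : Function.Bijective idxMap := by
  constructor
  · rintro (⟨a, b⟩ | ⟨a, b⟩) (⟨c, d⟩ | ⟨c, d⟩) h <;> simp only [idxMap, Prod.mk.injEq] at h
    · have : a = c := by omega
      have : b = d := by omega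
      simp [*]
    · omega
    · omega
    · have : a = c := by omega
      have : b = d := by omega
      simp [*]
  · rintro ⟨m, n⟩
    rcases Int.even_or_odd' (m + n) with ⟨k, hk | hk⟩
    · refine ⟨Sum.inr (k - 1, m - k), ?_⟩
      simp only [idxMap, Prod.mk.injEq]
      omega
    · refine ⟨Sum.inl (k, m - k - 1), ?_⟩
      simp only [idxMap, Prod.mk.injEq]
      omega

lemma thTerm_inl (μ a b : ℂ) (p : ℤ × ℤ) :
    thTerm μ (a+b) (p.1 + p.2 + 1) * thTerm μ (a-b) (p.1 - p.2) = eTerm μ a p.1 * oTerm μ b p.2 := by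
  have h := Complex.exp_int_mul_two_pi_mul_I p.1
  rw [← mul_one (_ * oTerm _ _ _), ← h]
  rw [thTerm, thTerm, eTerm, oTerm, jacobiTheta₂_term, jacobiTheta₂_term]
  simp only [← Complex.exp_add]
  congr 1
  push_cast
  ring

lemma thTerm_inr (μ a b : ℂ) (p : ℤ × ℤ) :
    thTerm μ (a+b) (p.1 + p.2 + 1) * thTerm μ (a-b) (p.1 - p.2 + 1)
      = - (oTerm μ a p.1 * eTerm μ b p.2) := by
  have h := Complex.exp_int_mul_two_pi_mul_I p.1
  have h' := Complex.exp_pi_mul_I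
  rw [← mul_one (_ * eTerm _ _ _), ← h, ← neg_one_mul, ← h']
  rw [thTerm, thTerm, eTerm, oTerm, jacobiTheta₂_term, jacobiTheta₂_term]
  simp only [← Complex.exp_add]
  congr 1
  push_cast
  ring

lemma thOdd_mul (μ a b : ℂ) (hμ : 0 < μ.im) : thOdd (a+b) μ * thOdd (a-b) μ =
    (∑' k, eTerm μ a k) * (∑' k, oTerm μ b k) - (∑' k, oTerm μ a k) * (∑' k, eTerm μ b k) := by
  have s1 := (summable_thTerm μ (a+b) hμ).norm
  have s2 := (summable_thTerm μ (a-b) hμ).norm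
  have H : HasSum (fun p : ℤ × ℤ => thTerm μ (a+b) p.1 * thTerm μ (a-b) p.2)
      (thOdd (a+b) μ * thOdd (a-b) μ) := by
    have e : thOdd (a+b) μ * thOdd (a-b) μ = (∑' k, thTerm μ (a+b) k) * ∑' k, thTerm μ (a-b) k := rfl
    rw [e, tsum_mul_tsum_of_summable_norm s1 s2]
    exact (summable_mul_of_summable_norm s1 s2).hasSum
  have e1 := (summable_eTerm μ a hμ).norm
  have e2 := (summable_eTerm μ b hμ).norm
  have o1 := (summable_oTerm μ a hμ).norm
  have o2 := (summable_oTerm μ b hμ).norm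
  have H1 : HasSum (fun p : ℤ × ℤ => eTerm μ a p.1 * oTerm μ b p.2)
      ((∑' k, eTerm μ a k) * (∑' k, oTerm μ b k)) := by
    rw [tsum_mul_tsum_of_summable_norm e1 o2]
    exact (summable_mul_of_summable_norm e1 o2).hasSum
  have H2 : HasSum (fun p : ℤ × ℤ => oTerm μ a p.1 * eTerm μ b p.2)
      ((∑' k, oTerm μ a k) * (∑' k, eTerm μ b k)) := by
    rw [tsum_mul_tsum_of_summable_norm o1 e2]
    exact (summable_mul_of_summable_norm o1 e2).hasSum
  have H' := ((Equiv.ofBijective idxMap idxMap_bij).hasSum_iff).2 H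
  have H'' : HasSum ((fun p : ℤ × ℤ => thTerm μ (a+b) p.1 * thTerm μ (a-b) p.2) ∘
      (Equiv.ofBijective idxMap idxMap_bij))
      ((∑' k, eTerm μ a k) * (∑' k, oTerm μ b k) + -((∑' k, oTerm μ a k) * (∑' k, eTerm μ b k))) := by
    refine HasSum.sum ?_ ?_
    · refine H1.congr_fun ?_
      intro p
      exact thTerm_inl μ a b p
    · refine H2.neg.congr_fun ?_
      intro p
      exact thTerm_inr μ a b p
  rw [H'.unique H'']
  ring

lemma thOdd_neg (μ x : ℂ) : thOdd (-x) μ = - thOdd x μ := by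
  rw [thOdd, ← (Equiv.subLeft (1:ℤ)).tsum_eq, thOdd, ← tsum_neg]
  refine tsum_congr fun m => ?_
  have h := Complex.exp_int_mul_two_pi_mul_I (-m)
  have h' := Complex.exp_pi_mul_I
  have e : ∀ z : ℂ, -cexp z = cexp (z + (Real.pi * I + ((-m : ℤ) : ℂ) * (2 * Real.pi * I))) := by
    intro z
    rw [Complex.exp_add, Complex.exp_add, h, h']
    ring
  rw [e, show (Equiv.subLeft (1:ℤ)) m = 1 - m from rfl]
  congr 1
  push_cast
  ring

lemma thOdd_weier (μ a b c d : ℂ) (hμ : 0 < μ.im) :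
    thOdd (a+b) μ * thOdd (a-b) μ * (thOdd (c+d) μ * thOdd (c-d) μ)
    - thOdd (a+c) μ * thOdd (a-c) μ * (thOdd (b+d) μ * thOdd (b-d) μ)
    + thOdd (a+d) μ * thOdd (a-d) μ * (thOdd (b+c) μ * thOdd (b-c) μ) = 0 := by
  simp only [thOdd_mul _ _ _ hμ]
  ring

lemma thOdd_zero (μ : ℂ) : thOdd 0 μ = 0 := by
  have := thOdd_neg μ 0
  rw [neg_zero] at this
  linear_combination this / 2

lemma deriv_thOdd_neg (μ x : ℂ) :
    deriv (fun z => thOdd z μ) (-x) = deriv (fun z => thOdd z μ) x := by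
  have h : (fun z => thOdd (-z) μ) = fun z => - thOdd z μ := funext (thOdd_neg μ)
  have h1 := deriv_comp_neg (fun z => thOdd z μ) x
  rw [h, deriv.fun_neg] at h1
  linear_combination h1

lemma thOdd_fay (μ x y u : ℂ) (hμ : 0 < μ.im) :
    deriv (fun z => thOdd z μ) 0 * thOdd (x+y) μ * thOdd (x+u) μ * thOdd (y+u) μ
    = deriv (fun z => thOdd z μ) x * thOdd y μ * thOdd u μ * thOdd (x+y+u) μ
    + thOdd x μ * deriv (fun z => thOdd z μ) y * thOdd u μ * thOdd (x+y+u) μ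
    + thOdd x μ * thOdd y μ * deriv (fun z => thOdd z μ) u * thOdd (x+y+u) μ
    - thOdd x μ * thOdd y μ * thOdd u μ * deriv (fun z => thOdd z μ) (x+y+u) := by
  have hd := differentiable_thOdd μ hμ
  have W : ∀ t : ℂ, thOdd (x+y) μ * thOdd (x+u) μ * (thOdd (t-(y+u)) μ * thOdd t μ)
      - thOdd (x+t) μ * thOdd (x+y+u-t) μ * (thOdd (-u) μ * thOdd y μ)
      + thOdd x μ * thOdd (x+y+u) μ * (thOdd (t-u) μ * thOdd (y-t) μ) = 0 := by
    intro t
    have := thOdd_weier μ (x+(y+u)/2) ((y-u)/2) (t-(y+u)/2) (-(y+u)/2) hμ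
    ring_nf at this ⊢
    exact this
  have hA : ∀ s c : ℂ, HasDerivAt (fun t => thOdd (t - c) μ) (deriv (fun z => thOdd z μ) (s - c)) s :=
    fun s c => (hd (s-c)).hasDerivAt.comp_sub_const s c
  have hB : ∀ s c : ℂ, HasDerivAt (fun t => thOdd (c + t) μ) (deriv (fun z => thOdd z μ) (c + s)) s :=
    fun s c => (hd (c+s)).hasDerivAt.comp_const_add c s
  have hC : ∀ s c : ℂ, HasDerivAt (fun t => thOdd (c - t) μ) (-deriv (fun z => thOdd z μ) (c - s)) s :=
    fun s c => (hd (c-s)).hasDerivAt.comp_const_sub c s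
  have hT := (hd 0).hasDerivAt
  have H := (((((hA 0 (y+u)).mul hT).const_mul (thOdd (x+y) μ * thOdd (x+u) μ)).sub
    (((hB 0 x).mul (hC 0 (x+y+u))).mul_const (thOdd (-u) μ * thOdd y μ))).add
    (((hA 0 u).mul (hC 0 y)).const_mul (thOdd x μ * thOdd (x+y+u) μ)))
  have H0 := H.unique ((hasDerivAt_const (0:ℂ) (0:ℂ)).congr_of_eventuallyEq
    (Filter.Eventually.of_forall W))
  simp only [zero_sub, add_zero, sub_zero, thOdd_zero, thOdd_neg, deriv_thOdd_neg] at H0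
  linear_combination -H0

lemma theta00_eq (K : ℕ) (x μ : ℂ) : thetaAB K 0 0 x μ = thOdd x μ := by
  rw [thetaAB, Theta, thOdd]
  refine tsum_congr fun m => ?_
  congr 1
  push_cast
  ring

lemma theta1_eq (x μ : ℂ) : theta1 x μ = - thOdd x μ := by
  rw [theta1, Theta, thOdd, ← (Equiv.addRight (1:ℤ)).tsum_eq (fun m : ℤ => Complex.exp
    ((Real.pi : ℂ) * Complex.I * μ * ((m : ℂ) - 1/2)^2
    + 2 * (Real.pi : ℂ) * Complex.I * ((m : ℂ) - 1/2) * (x + 1/2)))]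
  congr 1
  refine tsum_congr fun m => ?_
  congr 1
  simp only [Equiv.coe_addRight]
  push_cast
  ring

lemma rho_eq (x μ : ℂ) : rho x μ = deriv (fun z => thOdd z μ) x / thOdd x μ := by
  simp only [rho, theta1_eq, deriv.fun_neg, neg_div_neg_eq]

lemma thetaAB_eq_s12 (K : ℕ) (A B : ℤ) (x μ : ℂ) : thetaAB K A B x μ =
    Complex.exp (Real.pi * I * μ * ((A:ℂ)/K)^2 + 2 * Real.pi * I * ((A:ℂ)/K) * (1/2 - (B:ℂ)/K))
    * (Complex.exp (2 * Real.pi * I * ((A:ℂ)/K) * x) * thOdd (x + ((A:ℂ)/K*μ - (B:ℂ)/K)) μ) := by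
  rw [thetaAB, Theta, thOdd, ← tsum_mul_left, ← tsum_mul_left]
  refine tsum_congr fun m => ?_
  simp only [← Complex.exp_add]
  congr 1
  push_cast
  ring

lemma deriv_thetaAB (K : ℕ) (A B : ℤ) (x μ : ℂ) (hμ : 0 < μ.im) :
    deriv (fun z => thetaAB K A B z μ) x =
    Complex.exp (Real.pi * I * μ * ((A:ℂ)/K)^2 + 2 * Real.pi * I * ((A:ℂ)/K) * (1/2 - (B:ℂ)/K))
    * (Complex.exp (2 * Real.pi * I * ((A:ℂ)/K) * x) * (2 * Real.pi * I * ((A:ℂ)/K))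
        * thOdd (x + ((A:ℂ)/K*μ - (B:ℂ)/K)) μ
      + Complex.exp (2 * Real.pi * I * ((A:ℂ)/K) * x) *
        deriv (fun z => thOdd z μ) (x + ((A:ℂ)/K*μ - (B:ℂ)/K))) := by
  simp only [thetaAB_eq_s12]
  have h1 : HasDerivAt (fun z : ℂ => Complex.exp (2 * Real.pi * I * ((A:ℂ)/K) * z))
      (Complex.exp (2 * Real.pi * I * ((A:ℂ)/K) * x) * (2 * Real.pi * I * ((A:ℂ)/K))) x := by
    simpa using ((hasDerivAt_id x).const_mul (2 * Real.pi * I * ((A:ℂ)/K))).cexp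
  have h2 := ((differentiable_thOdd μ hμ) (x + ((A:ℂ)/K*μ - (B:ℂ)/K))).hasDerivAt.comp_add_const x
    ((A:ℂ)/K*μ - (B:ℂ)/K)
  exact ((h1.mul h2).const_mul _).deriv

/-- the identity
`w_{AB}(z₁−z₂)(ρ(z₂−γ) − ρ(z₁−γ)) = w_{AB}(γ−z₂)·w_{−A,−B}(γ−z₁) − 2πi·Z_{AB}(z₁−z₂)`. -/
theorem wAB_rho_ZAB_identity2 (K : ℕ) (hK : 2 ≤ K) (A B : ℤ)
    (hAB : ¬(A % (K : ℤ) = 0 ∧ B % (K : ℤ) = 0)) (μ : ℂ) (hμ : 0 < μ.im)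
    (γ z₁ z₂ : ℂ)
    (h1 : thetaAB K 0 0 (z₁ - z₂) μ ≠ 0) (h2 : thetaAB K 0 0 (z₂ - γ) μ ≠ 0)
    (h3 : thetaAB K 0 0 (z₁ - γ) μ ≠ 0) (h4 : thetaAB K 0 0 (γ - z₂) μ ≠ 0)
    (h5 : thetaAB K 0 0 (γ - z₁) μ ≠ 0)
    (h6 : thetaAB K A B (z₁ - z₂) μ ≠ 0) (h7 : thetaAB K A B 0 μ ≠ 0)
    (h8 : thetaAB K (-A) (-B) 0 μ ≠ 0) :
    wAB K A B (z₁ - z₂) μ * (rho (z₂ - γ) μ - rho (z₁ - γ) μ)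
      = wAB K A B (γ - z₂) μ * wAB K (-A) (-B) (γ - z₁) μ
          - 2 * (Real.pi : ℂ) * Complex.I * ZAB K A B (z₁ - z₂) μ := by
  have e00 : (fun z => thetaAB K 0 0 z μ) = fun z => thOdd z μ := funext fun z => theta00_eq K z μ
  have hpi : (2 * (Real.pi : ℂ) * Complex.I) ≠ 0 := Complex.two_pi_I_ne_zero
  have F := thOdd_fay μ (γ - z₂) (-(γ - z₁)) ((A:ℂ)/K*μ - (B:ℂ)/K) hμ
  have E : Complex.exp (2 * Real.pi * I * ((A:ℂ)/K) * (z₁ - z₂)) =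
      Complex.exp (2 * Real.pi * I * ((A:ℂ)/K) * (γ - z₂))
      * Complex.exp (2 * Real.pi * I * (((-A : ℤ):ℂ)/K) * (γ - z₁)) := by
    rw [← Complex.exp_add]; congr 1; push_cast; ring
  have n1 : z₂ - γ = -(γ - z₂) := by ring
  have n2 : z₁ - γ = -(γ - z₁) := by ring
  have n3 : γ - z₂ + -(γ - z₁) = z₁ - z₂ := by ring
  have n4 : (((-A : ℤ):ℂ)/K*μ - ((-B : ℤ):ℂ)/K) = -((A:ℂ)/K*μ - (B:ℂ)/K) := by push_cast; ring
  have n5 : γ - z₁ + -((A:ℂ)/K*μ - (B:ℂ)/K) = -(-(γ - z₁) + ((A:ℂ)/K*μ - (B:ℂ)/K)) := by ring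
  rw [n3, deriv_thOdd_neg, thOdd_neg] at F
  simp only [theta00_eq] at h1 h2 h3 h4 h5
  simp only [wAB, ZAB, e00, theta00_eq, rho_eq, deriv_thetaAB _ _ _ _ _ hμ]
  simp only [thetaAB_eq_s12, mul_zero, zero_add, Complex.exp_zero, one_mul] at h6 h7 h8 ⊢
  rw [E] at h6 ⊢
  rw [n4, thOdd_neg] at h8
  rw [n4, n5, n1, n2]
  simp only [deriv_thOdd_neg, thOdd_neg]
  generalize Complex.exp (2 * Real.pi * I * ((A:ℂ)/K) * (γ - z₂)) = p at *
  generalize Complex.exp (2 * Real.pi * I * (((-A : ℤ):ℂ)/K) * (γ - z₁)) = q at *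
  generalize Complex.exp (Real.pi * I * μ * ((A:ℂ)/K)^2
    + 2 * Real.pi * I * ((A:ℂ)/K) * (1/2 - (B:ℂ)/K)) = c at *
  generalize Complex.exp (Real.pi * I * μ * (((-A : ℤ):ℂ)/K)^2
    + 2 * Real.pi * I * (((-A : ℤ):ℂ)/K) * (1/2 - ((-B : ℤ):ℂ)/K)) = c' at *
  generalize 2 * (Real.pi:ℂ) * I = w at *
  generalize (A:ℂ)/K*μ - (B:ℂ)/K = u at *
  generalize (A:ℂ)/K = α at *
  generalize deriv (fun z => thOdd z μ) (γ - z₂) = X' at *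
  generalize deriv (fun z => thOdd z μ) (γ - z₁) = Y' at *
  generalize deriv (fun z => thOdd z μ) u = U' at *
  generalize deriv (fun z => thOdd z μ) (z₁ - z₂ + u) = V' at *
  generalize deriv (fun z => thOdd z μ) 0 = D at *
  generalize thOdd (γ - z₂) μ = X at *
  generalize thOdd (γ - z₁) μ = Y at *
  generalize thOdd (γ - z₂ + u) μ = P at *
  generalize thOdd (-(γ - z₁) + u) μ = Q at *
  generalize thOdd (z₁ - z₂ + u) μ = V at *
  generalize thOdd (z₁ - z₂) μ = W at *
  generalize thOdd u μ = U at *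
  have hc : c ≠ 0 := left_ne_zero_of_mul h7
  have hU : U ≠ 0 := right_ne_zero_of_mul h7
  have hc' : c' ≠ 0 := left_ne_zero_of_mul h8
  have hpq : p * q ≠ 0 := left_ne_zero_of_mul (right_ne_zero_of_mul h6)
  have hp : p ≠ 0 := left_ne_zero_of_mul hpq
  have hq : q ≠ 0 := right_ne_zero_of_mul hpq
  have hV : V ≠ 0 := right_ne_zero_of_mul (right_ne_zero_of_mul h6)
  clear h2 h3 h6 h7 h8 hpq
  field_simp
  linear_combination (-D) * F
end

section
/- Trigonometric degeneration of the K = 2 elliptic r-matrix coefficients: for every γ ∈ ℂ with γ ∉ ℤ, as the real parameter t tends to +∞ one has w_{10}(γ; it) → π/sin(πγ), w_{11}(γ; it) → π/sin(πγ), and w_{01}(γ; it) → π·cot(πγ). Consequently (with the identification σ_{10} = σ₁, σ_{11} = iσ₂, σ_{01} = σ₃ of the Pauli matrices) the elliptic r-matrix r(γ;μ) = ∑_{(A,B)≠(0,0)} w_{AB}(γ;μ)·σ_{AB}⊗σ^{AB} tends to the trigonometric r-matrix r₀(γ) = (1/2)(π/sin πγ)(σ₁⊗σ₁) + (1/2)(π/sin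 πγ)(σ₂⊗σ₂) + (1/2)(π cot πγ)(σ₃⊗σ₃). -/
open Complex Filter

/-- The Pauli matrix `σ₁`. -/
def pauli1 : Matrix (Fin 2) (Fin 2) ℂ := !![0, 1; 1, 0]

/-- The Pauli matrix `σ₂`. -/
def pauli2 : Matrix (Fin 2) (Fin 2) ℂ := !![0, -Complex.I; Complex.I, 0]

/-- The Pauli matrix `σ₃`. -/
def pauli3 : Matrix (Fin 2) (Fin 2) ℂ := !![1, 0; 0, -1]

open Kronecker in
/-- The trigonometric r-matrix `r₀(γ)`. -/
noncomputable def rtrig (γ : ℂ) : Matrix (Fin 2 × Fin 2) (Fin 2 × Fin 2) ℂ :=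
  ((1 : ℂ)/2 * ((Real.pi : ℂ) / Complex.sin ((Real.pi : ℂ) * γ))) • (pauli1 ⊗ₖ pauli1)
  + ((1 : ℂ)/2 * ((Real.pi : ℂ) / Complex.sin ((Real.pi : ℂ) * γ))) • (pauli2 ⊗ₖ pauli2)
  + ((1 : ℂ)/2 * ((Real.pi : ℂ) * Complex.cot ((Real.pi : ℂ) * γ))) • (pauli3 ⊗ₖ pauli3)

/-- Summand of the rescaled theta series. -/
noncomputable def trm (p q : ℝ) (γ : ℂ) (t c : ℝ) (m : ℤ) : ℂ :=
  Complex.exp (((-Real.pi * t * (((m : ℝ) + p)^2 - c) : ℝ) : ℂ)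
    + 2 * (Real.pi : ℂ) * Complex.I * ((m : ℂ) + (p : ℂ)) * (γ + (q : ℂ)))

lemma trm_eq (p q : ℝ) (γ : ℂ) (t c : ℝ) (m : ℤ) :
    trm p q γ t c m = Complex.exp ((Real.pi * t * c : ℝ) : ℂ) *
      (Complex.exp ((Real.pi : ℂ) * Complex.I * (t * Complex.I) * (p : ℂ)^2
        + 2 * (Real.pi : ℂ) * Complex.I * p * (γ + q)) *
      jacobiTheta₂_term m (γ + q + p * (t * Complex.I)) (t * Complex.I)) := by
  rw [trm, jacobiTheta₂_term, ← Complex.exp_add, ← Complex.exp_add]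
  congr 1
  push_cast
  linear_combination (-(Real.pi : ℂ) * t * (m + p)^2) * Complex.I_sq

lemma Theta_eq (p q : ℝ) (γ : ℂ) (t : ℝ) :
    Theta p q γ (t * Complex.I) =
      Complex.exp ((Real.pi : ℂ) * Complex.I * (t * Complex.I) * (p : ℂ)^2
        + 2 * (Real.pi : ℂ) * Complex.I * p * (γ + q)) *
      jacobiTheta₂ (γ + q + p * (t * Complex.I)) (t * Complex.I) := by
  rw [Theta, jacobiTheta₂, ← tsum_mul_left]
  congr 1
  ext m
  rw [jacobiTheta₂_term, ← Complex.exp_add]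
  congr 1
  ring

lemma im_tI {t : ℝ} (ht : 0 < t) : 0 < ((t : ℂ) * Complex.I).im := by
  simpa using ht

lemma hasSum_trm (p q : ℝ) (γ : ℂ) {t : ℝ} (ht : 0 < t) (c : ℝ) :
    HasSum (trm p q γ t c)
      (Complex.exp ((Real.pi * t * c : ℝ) : ℂ) * Theta p q γ (t * Complex.I)) := by
  rw [Theta_eq, funext (trm_eq p q γ t c)]
  exact ((hasSum_jacobiTheta₂_term _ (im_tI ht)).mul_left _).mul_left _

lemma hasSum_trm' (p q : ℝ) (γ : ℂ) {t : ℝ} (ht : 0 < t) (c : ℝ) :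
    HasSum (fun m : ℤ => (2 * (Real.pi : ℂ) * Complex.I * ((m : ℂ) + p)) * trm p q γ t c m)
      (Complex.exp ((Real.pi * t * c : ℝ) : ℂ) *
        deriv (fun z => Theta p q z (t * Complex.I)) γ) := by
  have hd : HasDerivAt (fun z => Theta p q z (t * Complex.I))
      (Complex.exp ((Real.pi : ℂ) * Complex.I * (t * Complex.I) * (p : ℂ)^2
        + 2 * (Real.pi : ℂ) * Complex.I * p * (γ + q)) * (2 * (Real.pi : ℂ) * Complex.I * p) *
        jacobiTheta₂ (γ + q + p * (t * Complex.I)) (t * Complex.I) +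
       Complex.exp ((Real.pi : ℂ) * Complex.I * (t * Complex.I) * (p : ℂ)^2
        + 2 * (Real.pi : ℂ) * Complex.I * p * (γ + q)) *
        jacobiTheta₂' (γ + q + p * (t * Complex.I)) (t * Complex.I)) γ := by
    simp_rw [Theta_eq]
    have h1 : HasDerivAt (fun z : ℂ => (Real.pi : ℂ) * Complex.I * (t * Complex.I) * (p : ℂ)^2
        + 2 * (Real.pi : ℂ) * Complex.I * p * (z + q)) (2 * (Real.pi : ℂ) * Complex.I * p) γ := by
      simpa using (((hasDerivAt_id γ).add_const (q : ℂ)).const_mul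
        (2 * (Real.pi : ℂ) * Complex.I * p)).const_add
        ((Real.pi : ℂ) * Complex.I * (t * Complex.I) * (p : ℂ)^2)
    have h2 : HasDerivAt (fun z : ℂ => jacobiTheta₂ (z + q + p * (t * Complex.I)) (t * Complex.I))
        (jacobiTheta₂' (γ + q + p * (t * Complex.I)) (t * Complex.I)) γ := by
      have h3 := hasDerivAt_jacobiTheta₂_fst (γ + q + p * (t * Complex.I)) (im_tI ht)
      have h4 : HasDerivAt (fun z : ℂ => z + q + p * (t * Complex.I)) 1 γ :=
        ((hasDerivAt_id γ).add_const (q : ℂ)).add_const (p * (t * Complex.I))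
      simpa [Function.comp_def] using h3.comp γ h4
    exact h1.cexp.mul h2
  rw [hd.deriv]
  have := ((((hasSum_jacobiTheta₂_term (γ + q + p * (t * Complex.I)) (im_tI ht)).mul_left
    (Complex.exp ((Real.pi : ℂ) * Complex.I * (t * Complex.I) * (p : ℂ)^2
        + 2 * (Real.pi : ℂ) * Complex.I * p * (γ + q)) * (2 * (Real.pi : ℂ) * Complex.I * p))).add
    ((hasSum_jacobiTheta₂'_term (γ + q + p * (t * Complex.I)) (im_tI ht)).mul_left
    (Complex.exp ((Real.pi : ℂ) * Complex.I * (t * Complex.I) * (p : ℂ)^2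
        + 2 * (Real.pi : ℂ) * Complex.I * p * (γ + q))))).mul_left
    (Complex.exp ((Real.pi * t * c : ℝ) : ℂ)))
  refine this.congr_fun ?_
  intro m
  rw [trm_eq, jacobiTheta₂'_term]
  ring

lemma norm_trm_le (p q : ℝ) (γ : ℂ) {t c : ℝ} (ht : 1 ≤ t) (m : ℤ)
    (hc : c ≤ ((m : ℝ) + p)^2) : ‖trm p q γ t c m‖ ≤ ‖trm p q γ 1 c m‖ := by
  rw [trm, trm, Complex.exp_add, Complex.exp_add, norm_mul, norm_mul]
  refine mul_le_mul_of_nonneg_right ?_ (norm_nonneg _)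
  rw [Complex.norm_exp, Complex.norm_exp, Complex.ofReal_re, Complex.ofReal_re, Real.exp_le_exp]
  have := mul_nonneg (mul_nonneg Real.pi_pos.le (sub_nonneg.2 ht)) (sub_nonneg.2 hc)
  nlinarith

lemma tendsto_series (p q : ℝ) (γ : ℂ) (c : ℝ) (a : ℤ → ℂ) (S : Finset ℤ)
    (hS : ∀ m ∈ S, ((m : ℝ) + p)^2 = c) (hS' : ∀ m ∉ S, c < ((m : ℝ) + p)^2)
    (F : ℝ → ℂ) (hF : ∀ t : ℝ, 0 < t → HasSum (fun m => a m * trm p q γ t c m) (F t)) :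
    Tendsto F atTop (nhds (∑ m ∈ S, a m *
      Complex.exp (2 * (Real.pi : ℂ) * Complex.I * ((m : ℂ) + (p : ℂ)) * (γ + (q : ℂ))))) := by
  classical
  have hle : ∀ m : ℤ, c ≤ ((m : ℝ) + p)^2 := fun m => by
    by_cases h : m ∈ S
    · exact (hS m h).ge
    · exact (hS' m h).le
  have key : Tendsto (fun t : ℝ => ∑' m, a m * trm p q γ t c m) atTop
      (nhds (∑' m, if m ∈ S then a m *
      Complex.exp (2 * (Real.pi : ℂ) * Complex.I * ((m : ℂ) + (p : ℂ)) * (γ + (q : ℂ))) else 0)) := by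
    refine tendsto_tsum_of_dominated_convergence (hF 1 one_pos).summable.norm ?_ ?_
    · intro m
      split_ifs with h
      · simp [trm, hS m h]
      · rw [← mul_zero (a m)]
        refine Tendsto.const_mul _ ?_
        rw [tendsto_zero_iff_norm_tendsto_zero]
        simp_rw [trm, Complex.exp_add, norm_mul, Complex.norm_exp (Complex.ofReal _), Complex.ofReal_re]
        rw [← zero_mul ‖Complex.exp
          (2 * (Real.pi : ℂ) * Complex.I * ((m : ℂ) + (p : ℂ)) * (γ + (q : ℂ)))‖]
        refine Tendsto.mul_const _ (Real.tendsto_exp_atBot.comp ?_)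
        have hpos : 0 < Real.pi * (((m : ℝ) + p)^2 - c) :=
          mul_pos Real.pi_pos (sub_pos.2 (hS' m h))
        have := tendsto_neg_atTop_atBot.comp (tendsto_id.atTop_mul_const hpos)
        refine this.congr fun t => ?_
        simp only [Function.comp, id]
        ring
    · filter_upwards [eventually_ge_atTop (1 : ℝ)] with t ht m
      rw [norm_mul, norm_mul]
      exact mul_le_mul_of_nonneg_left (norm_trm_le p q γ ht m (hle m)) (norm_nonneg _)
  rw [tsum_eq_sum (s := S) (fun m hm => by simp [hm]), Finset.sum_congr rfl
    (fun m hm => if_pos hm)] at key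
  refine key.congr' ?_
  filter_upwards [eventually_gt_atTop (0 : ℝ)] with t ht
  exact (hF t ht).tsum_eq

lemma tendsto_Theta (p q : ℝ) (γ : ℂ) (c : ℝ) (S : Finset ℤ)
    (hS : ∀ m ∈ S, ((m : ℝ) + p)^2 = c) (hS' : ∀ m ∉ S, c < ((m : ℝ) + p)^2) :
    Tendsto (fun t : ℝ => Complex.exp ((Real.pi * t * c : ℝ) : ℂ) * Theta p q γ (t * Complex.I))
      atTop (nhds (∑ m ∈ S,
      Complex.exp (2 * (Real.pi : ℂ) * Complex.I * ((m : ℂ) + (p : ℂ)) * (γ + (q : ℂ))))) := by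
  have := tendsto_series p q γ c (fun _ => 1) S hS hS' _
    (fun t ht => by simpa using hasSum_trm p q γ ht c)
  simpa using this

lemma zero_sep : (∀ m ∈ ({0} : Finset ℤ), ((m : ℝ) + (0 : ℝ))^2 = 0) ∧
    (∀ m ∉ ({0} : Finset ℤ), (0 : ℝ) < ((m : ℝ) + (0 : ℝ))^2) := by
  refine ⟨by simp, fun m hm => ?_⟩
  have : (m : ℝ) ≠ 0 := by simpa using hm
  rw [add_zero]
  positivity

lemma half_sep : (∀ m ∈ ({0, 1} : Finset ℤ), ((m : ℝ) + (-1/2 : ℝ))^2 = 1/4) ∧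
    (∀ m ∉ ({0, 1} : Finset ℤ), (1/4 : ℝ) < ((m : ℝ) + (-1/2 : ℝ))^2) := by
  refine ⟨fun m hm => ?_, fun m hm => ?_⟩
  · simp only [Finset.mem_insert, Finset.mem_singleton] at hm
    rcases hm with rfl | rfl <;> norm_num
  · simp only [Finset.mem_insert, Finset.mem_singleton, not_or] at hm
    have h : 0 < m * (m - 1) := by
      rcases lt_or_gt_of_ne hm.1 with h | h
      · nlinarith
      · have : 2 ≤ m := by omega
        nlinarith
    have h' : (0 : ℝ) < m * (m - 1) := by exact_mod_cast h
    nlinarith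

lemma exp_pi_half : Complex.exp ((Real.pi : ℂ) * Complex.I / 2) = Complex.I := by
  rw [mul_div_right_comm, Complex.exp_pi_div_two_mul_I]

lemma exp_neg_pi_half : Complex.exp (-((Real.pi : ℂ) * Complex.I / 2)) = -Complex.I := by
  rw [Complex.exp_neg, exp_pi_half, Complex.inv_I]

lemma tendsto_00 (γ : ℂ) :
    Tendsto (fun t : ℝ => Complex.exp ((Real.pi * t * (1/4) : ℝ) : ℂ) *
      thetaAB 2 0 0 γ (t * Complex.I)) atTop (nhds (-2 * Complex.sin (Real.pi * γ))) := by
  have h := tendsto_Theta (-1/2) (1/2) γ (1/4) {0, 1} half_sep.1 half_sep.2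
  convert h using 2
  · congr 1; norm_num [thetaAB]
  · rw [Finset.sum_pair (by norm_num)]
    rw [Complex.sin]
    have e1 : 2 * (Real.pi : ℂ) * Complex.I * (((0 : ℤ) : ℂ) + ((-1/2 : ℝ) : ℂ)) * (γ + ((1/2 : ℝ) : ℂ))
      = -(Real.pi * γ) * Complex.I + -((Real.pi : ℂ) * Complex.I / 2) := by push_cast; ring
    have e2 : 2 * (Real.pi : ℂ) * Complex.I * (((1 : ℤ) : ℂ) + ((-1/2 : ℝ) : ℂ)) * (γ + ((1/2 : ℝ) : ℂ))
      = (Real.pi * γ) * Complex.I + ((Real.pi : ℂ) * Complex.I / 2) := by push_cast; ring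
    rw [e1, e2, Complex.exp_add, Complex.exp_add, exp_pi_half, exp_neg_pi_half]
    ring

lemma tendsto_00' :
    Tendsto (fun t : ℝ => Complex.exp ((Real.pi * t * (1/4) : ℝ) : ℂ) *
      deriv (fun z => thetaAB 2 0 0 z (t * Complex.I)) 0) atTop (nhds (-2 * (Real.pi : ℂ))) := by
  have h := tendsto_series (-1/2) (1/2) 0 (1/4) _ {0, 1} half_sep.1 half_sep.2 _
    (fun t ht => hasSum_trm' (-1/2) (1/2) 0 ht (1/4))
  have hT : ∀ z μ, thetaAB 2 0 0 z μ = Theta (-1/2) (1/2) z μ := by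
    intro z μ; norm_num [thetaAB]
  simp_rw [hT]
  convert h using 2
  rw [Finset.sum_pair (by norm_num)]
  have e1 : 2 * (Real.pi : ℂ) * Complex.I * (((0 : ℤ) : ℂ) + ((-1/2 : ℝ) : ℂ)) * (0 + ((1/2 : ℝ) : ℂ))
      = -((Real.pi : ℂ) * Complex.I / 2) := by push_cast; ring
  have e2 : 2 * (Real.pi : ℂ) * Complex.I * (((1 : ℤ) : ℂ) + ((-1/2 : ℝ) : ℂ)) * (0 + ((1/2 : ℝ) : ℂ))
      = ((Real.pi : ℂ) * Complex.I / 2) := by push_cast; ring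
  rw [e1, e2, exp_pi_half, exp_neg_pi_half]
  push_cast
  linear_combination (-2 * (Real.pi : ℂ)) * Complex.I_sq

lemma tendsto_01 (γ : ℂ) :
    Tendsto (fun t : ℝ => Complex.exp ((Real.pi * t * (1/4) : ℝ) : ℂ) *
      thetaAB 2 0 1 γ (t * Complex.I)) atTop (nhds (2 * Complex.cos (Real.pi * γ))) := by
  have h := tendsto_Theta (-1/2) 0 γ (1/4) {0, 1} half_sep.1 half_sep.2
  convert h using 2
  · congr 1; norm_num [thetaAB]
  · rw [Finset.sum_pair (by norm_num)]
    rw [Complex.cos]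
    have e1 : 2 * (Real.pi : ℂ) * Complex.I * (((0 : ℤ) : ℂ) + ((-1/2 : ℝ) : ℂ)) * (γ + ((0 : ℝ) : ℂ))
      = -(Real.pi * γ) * Complex.I := by push_cast; ring
    have e2 : 2 * (Real.pi : ℂ) * Complex.I * (((1 : ℤ) : ℂ) + ((-1/2 : ℝ) : ℂ)) * (γ + ((0 : ℝ) : ℂ))
      = (Real.pi * γ) * Complex.I := by push_cast; ring
    rw [e1, e2]
    ring

lemma tendsto_1B (B : ℤ) (γ : ℂ) :
    Tendsto (fun t : ℝ => Complex.exp ((Real.pi * t * 0 : ℝ) : ℂ) *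
      thetaAB 2 1 B γ (t * Complex.I)) atTop (nhds 1) := by
  have h := tendsto_Theta 0 (1/2 - (B : ℝ)/2) γ 0 {0} zero_sep.1 zero_sep.2
  convert h using 2
  · congr 1; norm_num [thetaAB]
  · simp

lemma tendsto_w (A B : ℤ) (γ : ℂ) (hs : Complex.sin (Real.pi * γ) ≠ 0) (c : ℝ) (x y : ℂ)
    (hx : Tendsto (fun t : ℝ => Complex.exp ((Real.pi * t * c : ℝ) : ℂ) *
      thetaAB 2 A B γ (t * Complex.I)) atTop (nhds x))
    (hy : Tendsto (fun t : ℝ => Complex.exp ((Real.pi * t * c : ℝ) : ℂ) *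
      thetaAB 2 A B 0 (t * Complex.I)) atTop (nhds y)) (hy0 : y ≠ 0) :
    Tendsto (fun t : ℝ => wAB 2 A B γ (t * Complex.I)) atTop
      (nhds (x * (-2 * (Real.pi : ℂ)) / (y * (-2 * Complex.sin (Real.pi * γ))))) := by
  have := (hx.mul tendsto_00').div (hy.mul (tendsto_00 γ))
    (mul_ne_zero hy0 (mul_ne_zero (by norm_num) hs))
  refine this.congr fun t => ?_
  simp only [Pi.div_apply]
  rw [wAB, mul_mul_mul_comm, mul_mul_mul_comm _ (thetaAB 2 A B 0 _), mul_div_mul_left]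
  exact mul_ne_zero (Complex.exp_ne_zero _) (Complex.exp_ne_zero _)

lemma sin_pi_ne (γ : ℂ) (hγ : ∀ n : ℤ, γ ≠ (n : ℂ)) : Complex.sin (Real.pi * γ) ≠ 0 := by
  rw [Complex.sin_ne_zero_iff]
  intro k h
  apply hγ k
  have : (Real.pi : ℂ) ≠ 0 := by exact_mod_cast Real.pi_ne_zero
  apply mul_left_cancel₀ this
  rw [h]; ring

lemma epsK_two : epsK 2 = -1 := by
  rw [epsK, ← Complex.exp_pi_mul_I]
  congr 1
  push_cast
  ring

lemma Fmat_two : Fmat 2 = pauli3 := by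
  ext i j
  fin_cases i <;> fin_cases j <;> simp [Fmat, epsK_two, pauli3]

lemma Hmat_two : Hmat 2 = pauli1 := by
  ext i j
  fin_cases i <;> fin_cases j <;> simp [Hmat, pauli1]

open Kronecker in
lemma rmat_two (γ μ : ℂ) : rmat 2 γ μ =
    ((1 : ℂ)/2 * wAB 2 1 0 γ μ) • (pauli1 ⊗ₖ pauli1)
  + ((1 : ℂ)/2 * wAB 2 1 1 γ μ) • (pauli2 ⊗ₖ pauli2)
  + ((1 : ℂ)/2 * wAB 2 0 1 γ μ) • (pauli3 ⊗ₖ pauli3) := by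
  have h10 : sigmaAB 2 1 0 ⊗ₖ sigmaDualAB 2 1 0 = ((1 : ℂ)/2) • (pauli1 ⊗ₖ pauli1) := by
    have a : sigmaAB 2 1 0 = pauli1 := by simp [sigmaAB, Hmat_two]
    have b : sigmaDualAB 2 1 0 = ((1 : ℂ)/2) • pauli1 := by
      simp [sigmaDualAB, sigmaAB, Hmat_two]
    rw [a, b, Matrix.kronecker_smul]
  have h01 : sigmaAB 2 0 1 ⊗ₖ sigmaDualAB 2 0 1 = ((1 : ℂ)/2) • (pauli3 ⊗ₖ pauli3) := by
    have a : sigmaAB 2 0 1 = pauli3 := by simp [sigmaAB, Fmat_two]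
    have b : sigmaDualAB 2 0 1 = ((1 : ℂ)/2) • pauli3 := by
      simp [sigmaDualAB, sigmaAB, Fmat_two]
    rw [a, b, Matrix.kronecker_smul]
  have hp : pauli1 * pauli3 = (-Complex.I) • pauli2 := by
    ext i j
    fin_cases i <;> fin_cases j <;> simp [pauli1, pauli2, pauli3]
  have h11 : sigmaAB 2 1 1 ⊗ₖ sigmaDualAB 2 1 1 = ((1 : ℂ)/2) • (pauli2 ⊗ₖ pauli2) := by
    have a : sigmaAB 2 1 1 = (-Complex.I) • pauli2 := by simp [sigmaAB, Fmat_two, Hmat_two, hp]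
    have b : sigmaDualAB 2 1 1 = (Complex.I/2) • pauli2 := by
      simp [sigmaDualAB, sigmaAB, Fmat_two, Hmat_two, hp, epsK_two, smul_smul]
      rw [← neg_smul]
      congr 1
      ring
    rw [a, b, Matrix.kronecker_smul, Matrix.smul_kronecker, smul_smul]
    congr 1
    linear_combination (-1/2 : ℂ) * Complex.I_sq
  rw [rmat]
  simp only [Finset.sum_range_succ, Finset.sum_range_zero]
  simp only [Nat.cast_zero, Nat.cast_one, h10, h01, h11, smul_smul]
  simp
  simp only [mul_comm]
  abel

/-- trigonometric degeneration of the `K = 2` elliptic r-matrix: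
as `t → +∞`, `w₁₀(γ;it) → π/sin(πγ)`, `w₁₁(γ;it) → π/sin(πγ)`,
`w₀₁(γ;it) → π·cot(πγ)`, and `r(γ;it) → r₀(γ)`. -/
theorem rmat_trigonometric_limit (γ : ℂ) (hγ : ∀ n : ℤ, γ ≠ (n : ℂ)) :
    Filter.Tendsto (fun t : ℝ => wAB 2 1 0 γ ((t : ℂ) * Complex.I)) Filter.atTop
      (nhds ((Real.pi : ℂ) / Complex.sin ((Real.pi : ℂ) * γ))) ∧
    Filter.Tendsto (fun t : ℝ => wAB 2 1 1 γ ((t : ℂ) * Complex.I)) Filter.atTop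
      (nhds ((Real.pi : ℂ) / Complex.sin ((Real.pi : ℂ) * γ))) ∧
    Filter.Tendsto (fun t : ℝ => wAB 2 0 1 γ ((t : ℂ) * Complex.I)) Filter.atTop
      (nhds ((Real.pi : ℂ) * Complex.cot ((Real.pi : ℂ) * γ))) ∧
    Filter.Tendsto (fun t : ℝ => rmat 2 γ ((t : ℂ) * Complex.I)) Filter.atTop
      (nhds (rtrig γ)) := by
  have hs := sin_pi_ne γ hγ
  have h10 : Filter.Tendsto (fun t : ℝ => wAB 2 1 0 γ ((t : ℂ) * Complex.I)) Filter.atTop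
      (nhds ((Real.pi : ℂ) / Complex.sin ((Real.pi : ℂ) * γ))) := by
    convert tendsto_w 1 0 γ hs 0 1 1 (tendsto_1B 0 γ) (tendsto_1B 0 0) one_ne_zero using 2
    field_simp
  have h11 : Filter.Tendsto (fun t : ℝ => wAB 2 1 1 γ ((t : ℂ) * Complex.I)) Filter.atTop
      (nhds ((Real.pi : ℂ) / Complex.sin ((Real.pi : ℂ) * γ))) := by
    convert tendsto_w 1 1 γ hs 0 1 1 (tendsto_1B 1 γ) (tendsto_1B 1 0) one_ne_zero using 2
    field_simp
  have h01 : Filter.Tendsto (fun t : ℝ => wAB 2 0 1 γ ((t : ℂ) * Complex.I)) Filter.atTop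
      (nhds ((Real.pi : ℂ) * Complex.cot ((Real.pi : ℂ) * γ))) := by
    convert tendsto_w 0 1 γ hs (1/4) _ _ (tendsto_01 γ) (tendsto_01 0) (by simp) using 2
    rw [Complex.cot_eq_cos_div_sin]
    simp only [mul_zero, Complex.cos_zero]
    field_simp
  refine ⟨h10, h11, h01, ?_⟩
  simp_rw [rmat_two]
  exact (((h10.const_mul _).smul_const _).add ((h11.const_mul _).smul_const _)).add
    ((h01.const_mul _).smul_const _)
end
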